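/- arXiv:2407.03807 — 3 statements merged into one kernel-verified Lean document; each statement's English description precedes it below -/
import Mathlib

section
/- For odd m ≥ 3, the automorphism group of the Walecki tournament W_{1_m} is the cyclic group of order m generated by σ: that is, a permutation φ of (ZMod n) ∪ {*} is an automorphism of W_{1_m} if and only if φ = σ^t for some integer t. -/
/-- Vertex set of the Walecki tournament on `2*m+1` vertices:
`ZMod (2*m)` together with the extra vertex `*`, encoded as `none`. -/
abbrev WVert (m : ℕ) := Option (ZMod (2 * m))

/-- The arc relation of the directed Hamilton cycle `C_j⁺`:
it has arcs `(*, j)` and `(j+m, *)`, together with the arcs `(j−k, j+k+1)` for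
`0 ≤ k ≤ m−1` and `(j+k, j−k)` for `1 ≤ k ≤ m−1` (arithmetic in `ZMod (2*m)`). -/
def Cplus (m : ℕ) (j : ZMod (2 * m)) (x y : WVert m) : Prop :=
  (x = none ∧ y = some j) ∨
  (x = some (j + (m : ZMod (2 * m))) ∧ y = none) ∨
  (∃ k : ℕ, k ≤ m - 1 ∧ x = some (j - (k : ZMod (2 * m))) ∧
    y = some (j + (k : ZMod (2 * m)) + 1)) ∨
  (∃ k : ℕ, 1 ≤ k ∧ k ≤ m - 1 ∧ x = some (j + (k : ZMod (2 * m))) ∧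
    y = some (j - (k : ZMod (2 * m))))

/-- The arc relation of the Walecki tournament `W_u` with signature `u ∈ (ZMod 2)^m`:
the arcs of `C_j⁺` when `u_j = 1`, and the arcs of `C_j⁻` (the reverse of `C_j⁺`)
when `u_j = 0`, for `0 ≤ j ≤ m−1`. -/
def warc (m : ℕ) (u : Fin m → ZMod 2) (x y : WVert m) : Prop :=
  ∃ j : Fin m, (u j = 1 ∧ Cplus m ((j : ℕ) : ZMod (2 * m)) x y) ∨
               (u j = 0 ∧ Cplus m ((j : ℕ) : ZMod (2 * m)) y x)

/-- `d(a)` for the arc `a = (x,y)`: the number of vertices `z ≠ x, y` such that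
`(y,z)` and `(z,x)` are both arcs, i.e. `x, y, z` span a directed triangle. -/
noncomputable def dcount {α : Type*} (arc : α → α → Prop) (x y : α) : ℕ :=
  {z : α | z ≠ x ∧ z ≠ y ∧ arc y z ∧ arc z x}.ncard

/-- `i(a)` for the arc `a = (x,y)`: the number of vertices `z ≠ x, y` with arcs
`(z,x)` and `(z,y)`. -/
noncomputable def icount {α : Type*} (arc : α → α → Prop) (x y : α) : ℕ :=
  {z : α | z ≠ x ∧ z ≠ y ∧ arc z x ∧ arc z y}.ncard

/-- `o(a)` for the arc `a = (x,y)`: the number of vertices `z ≠ x, y` with arcs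
`(x,z)` and `(y,z)`. -/
noncomputable def ocount {α : Type*} (arc : α → α → Prop) (x y : α) : ℕ :=
  {z : α | z ≠ x ∧ z ≠ y ∧ arc x z ∧ arc y z}.ncard

/-- `b(a)` for the arc `a = (x,y)`: the number of vertices `z ≠ x, y` with arcs
`(x,z)` and `(z,y)`. -/
noncomputable def bcount {α : Type*} (arc : α → α → Prop) (x y : α) : ℕ :=
  {z : α | z ≠ x ∧ z ≠ y ∧ arc x z ∧ arc z y}.ncard

/-- Two elements of `ZMod (2*m)` have the same parity if their difference is
twice an element of `ZMod (2*m)`. -/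
def sameParity (m : ℕ) (x y : ZMod (2 * m)) : Prop :=
  ∃ c : ZMod (2 * m), x - y = 2 * c

/-- Three distinct vertices `x, y, z` induce a directed triangle:
the three arcs among them form a directed 3-cycle. -/
def dirTri {α : Type*} (arc : α → α → Prop) (x y z : α) : Prop :=
  x ≠ y ∧ y ≠ z ∧ x ≠ z ∧
    ((arc x y ∧ arc y z ∧ arc z x) ∨ (arc x z ∧ arc z y ∧ arc y x))

/-- The all-ones signature `1_m`. -/
def onesSig (m : ℕ) : Fin m → ZMod 2 := fun _ => 1

/-- The complementing register shift `R_1`: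
`uR_1 = (1 − u_{m−1}, u_0, u_1, …, u_{m−2})`. -/
def shift1 (m : ℕ) (u : Fin m → ZMod 2) : Fin m → ZMod 2 := fun i =>
  if (i : ℕ) = 0 then 1 - u ⟨m - 1, Nat.sub_lt i.pos Nat.one_pos⟩
  else u ⟨(i : ℕ) - 1, lt_of_le_of_lt (Nat.sub_le _ _) i.isLt⟩

/-- The inverse of the complementing register shift `R_1`:
`(uR_1⁻¹)_i = u_{i+1}` for `i < m−1` and `(uR_1⁻¹)_{m−1} = 1 − u_0`. -/
def unshift1 (m : ℕ) (u : Fin m → ZMod 2) : Fin m → ZMod 2 := fun i =>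
  if h : (i : ℕ) = m - 1 then 1 - u ⟨0, i.pos⟩
  else u ⟨(i : ℕ) + 1, by have h1 := i.isLt; omega⟩

/-- `R_t` for an integer `t`: the `t`-th iterate of the complementing register
shift `R_1` (inverse iterates when `t` is negative). `Rshift m t u = u R_t`. -/
def Rshift (m : ℕ) (t : ℤ) (u : Fin m → ZMod 2) : Fin m → ZMod 2 :=
  if 0 ≤ t then (shift1 m)^[t.toNat] u else (unshift1 m)^[(-t).toNat] u

/-- The permutation `σ = (0 1 2 ⋯ m−1)(n−1 n−2 ⋯ m)` of the vertex set:
it fixes `*`, maps `k ↦ k+1` for `0 ≤ k ≤ m−2`, `m−1 ↦ 0`,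
`k ↦ k−1` for `m+1 ≤ k ≤ n−1`, and `m ↦ n−1`. -/
def sigmaFun (m : ℕ) : WVert m → WVert m
  | none => none
  | some x =>
      if x.val < m then some ((((x.val + 1) % m : ℕ)) : ZMod (2 * m))
      else some (((m + (x.val - m + (m - 1)) % m : ℕ)) : ZMod (2 * m))

/-- The inverse of the permutation `σ`. -/
def sigmaInvFun (m : ℕ) : WVert m → WVert m
  | none => none
  | some x =>
      if x.val < m then some ((((x.val + (m - 1)) % m : ℕ)) : ZMod (2 * m))
      else some (((m + (x.val - m + 1) % m : ℕ)) : ZMod (2 * m))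

/-- `σ^t` for an integer `t`: the `t`-th iterate of `σ`
(inverse iterates when `t` is negative). -/
def sigmaZ (m : ℕ) (t : ℤ) : WVert m → WVert m :=
  if 0 ≤ t then (sigmaFun m)^[t.toNat] else (sigmaInvFun m)^[(-t).toNat]

/-! For odd `m`, write `a → b` for `a b : ZMod m` when the representative of `b - a` in `[0, m)` is
odd; this is a rotational tournament. Label the vertices `0, …, m - 1` of `W_{1_m}` by a first copy
`A` of `ZMod m` and the vertices `2m - 1, …, m`, in this order, by a second copy `B`. Then `W_{1_m}`
becomes a doubling: each copy carries `→`, the vertex `*` dominates `A` and is dominated by `B`, and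
`B b` dominates `A a` exactly when `a → b`.

The twins `A a` and `B a` have no common out-neighbour, whereas `*` has one with every other vertex.
So every automorphism fixes `*` and hence both copies; since vertices of a tournament are determined
by their in-neighbours, it acts on both copies by the same automorphism of `→`. Finally `b = a - 2`
holds exactly when `a → b` and no `z` satisfies `a → z → b`, so an automorphism of `→` commutes with
translation by `-2`; as `-2` generates `ZMod m`, it is itself a translation. Translation by `1` on
both copies is `σ`. -/

section ZModVal

variable {n : ℕ}

theorem natCast_eq_natCast_iff_of_lt_two_mul {p s : ℕ} (hp : p < n) (hs : s < 2 * n) :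
    (p : ZMod n) = s ↔ s = p ∨ s = p + n := by
  rw [ZMod.natCast_eq_natCast_iff', Nat.mod_eq_of_lt hp]
  rcases lt_or_ge s n with hsn | hns
  · rw [Nat.mod_eq_of_lt hsn]
    omega
  · rw [Nat.mod_eq_sub_mod hns, Nat.mod_eq_of_lt (by omega)]
    omega

variable [NeZero n]

theorem eq_natCast_add_iff {x : ZMod n} {j k : ℕ} (h : j + k < 2 * n) :
    x = j + k ↔ j + k = x.val ∨ j + k = x.val + n := by
  rw [← natCast_eq_natCast_iff_of_lt_two_mul x.val_lt h, ZMod.natCast_zmod_val, Nat.cast_add]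

theorem eq_natCast_sub_iff {x : ZMod n} {j k : ℕ} (hj : j < n) (hk : k ≤ n) :
    x = j - k ↔ x.val + k = j ∨ x.val + k = j + n := by
  have hx := x.val_lt
  rw [← natCast_eq_natCast_iff_of_lt_two_mul hj (by omega), Nat.cast_add, ZMod.natCast_zmod_val,
    eq_sub_iff_add_eq, eq_comm]

theorem val_add_natCast (a : ZMod n) (k : ℕ) : (a + k).val = (a.val + k) % n := by
  rw [← ZMod.val_natCast, Nat.cast_add, ZMod.natCast_zmod_val]

theorem val_neg_two : (-2 : ZMod n).val = n - 2 := by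
  have hn : 0 < n := NeZero.pos n
  rw [ZMod.neg_val', ZMod.val_two_eq_two_mod]
  obtain rfl | rfl | h : n = 1 ∨ n = 2 ∨ 2 < n := by omega
  · rfl
  · rfl
  · rw [Nat.mod_eq_of_lt h, Nat.mod_eq_of_lt (by omega)]

end ZModVal

section Doubling

variable {V W : Type*} {R : V → V → Prop} {S : W → W → Prop}

/-- The doubling of a relation `R` on `V`: two copies of `V`, a first one (`Sum.inl`) and a second
one (`Sum.inr`), each carrying `R`, together with an apex `none` that dominates the first copy and
is dominated by the second one. Between the copies, `inr b` dominates `inl a` when `R a b`, and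
`inl a` dominates `inr b` otherwise. The Walecki tournament `W_{1_m}` has this shape. -/
def doubling (R : V → V → Prop) : Option (V ⊕ V) → Option (V ⊕ V) → Prop
  | none, none => False
  | none, some (.inl _) => True
  | none, some (.inr _) => False
  | some (.inl _), none => False
  | some (.inr _), none => True
  | some (.inl a), some (.inl b) => R a b
  | some (.inl a), some (.inr b) => ¬ R a b
  | some (.inr b), some (.inl a) => R a b
  | some (.inr a), some (.inr b) => R a b

/-- The isomorphism of doublings that applies a given relation isomorphism to both copies. -/
def doublingCongr (f : R ≃r S) : doubling R ≃r doubling S where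
  toEquiv := (f.toEquiv.sumCongr f.toEquiv).optionCongr
  map_rel_iff' {x y} := by
    rcases x with _ | a | a <;> rcases y with _ | b | b <;> simp [doubling, f.map_rel_iff]

theorem doubling_none_left_iff {x : Option (V ⊕ V)} :
    doubling R none x ↔ ∃ a, some (.inl a) = x := by
  rcases x with _ | a | a <;> simp [doubling]

theorem doubling_none_right_iff {x : Option (V ⊕ V)} :
    doubling R x none ↔ ∃ b, some (.inr b) = x := by
  rcases x with _ | a | a <;> simp [doubling]

theorem not_doubling_inl_and_doubling_inr [Std.Asymm R] (a : V) (z : Option (V ⊕ V)) :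
    ¬ (doubling R (some (.inl a)) z ∧ doubling R (some (.inr a)) z) := by
  rcases z with _ | c | c
  · simp [doubling]
  · exact fun ⟨hac, hca⟩ ↦ Std.Asymm.asymm (r := R) a c hac hca
  · exact fun ⟨hac, hac'⟩ ↦ hac hac'

theorem exists_doubling_none_and_doubling (hR : Relator.BiTotal R) {y : Option (V ⊕ V)}
    (hy : y ≠ none) : ∃ z, doubling R none z ∧ doubling R y z := by
  rcases y with _ | a | b
  · contradiction
  · obtain ⟨c, hc⟩ := hR.1 a
    exact ⟨some (.inl c), trivial, hc⟩
  · obtain ⟨c, hc⟩ := hR.2 b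
    exact ⟨some (.inl c), trivial, hc⟩

theorem doubling_relIso_apply_none [Std.Asymm R] (hR : Relator.BiTotal R)
    (e : doubling R ≃r doubling R) : e none = none := by
  have hcommon (y : Option (V ⊕ V)) (hy : y ≠ e none) :
      ∃ z, doubling R (e none) z ∧ doubling R y z := by
    obtain ⟨z, hz, hyz⟩ := exists_doubling_none_and_doubling hR
      (show e.symm y ≠ none from fun h ↦ hy (by rw [← h, e.apply_symm_apply]))
    exact ⟨e z, e.map_rel_iff.2 hz, by rwa [← e.apply_symm_apply y, e.map_rel_iff]⟩
  rcases h : e none with _ | a | a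
  · rfl
  · obtain ⟨z, hl, hr⟩ := hcommon (some (.inr a)) (by simp [h])
    exact (not_doubling_inl_and_doubling_inr a z ⟨h ▸ hl, hr⟩).elim
  · obtain ⟨z, hr, hl⟩ := hcommon (some (.inl a)) (by simp [h])
    exact (not_doubling_inl_and_doubling_inr a z ⟨hl, h ▸ hr⟩).elim

theorem exists_relIso_doubling_apply_inl {e : doubling R ≃r doubling R} (he : e none = none) :
    ∃ f : R ≃r R, ∀ a, e (some (.inl a)) = some (.inl (f a)) := by
  have hcopy {e : doubling R ≃r doubling R} (he : e none = none) (a : V) :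
      ∃ c, some (.inl c) = e (some (.inl a)) := by
    rw [← doubling_none_left_iff (R := R), ← he, e.map_rel_iff]
    trivial
  choose f hf using hcopy he
  choose g hg using hcopy (e := e.symm) (e.symm_apply_eq.2 he.symm)
  refine ⟨⟨⟨f, g, fun a ↦ ?_, fun c ↦ ?_⟩, fun {a b} ↦ ?_⟩, fun a ↦ (hf a).symm⟩
  · simpa [hf] using hg (f a)
  · simpa [hg] using hf (g c)
  · change doubling R (some (.inl (f a))) (some (.inl (f b))) ↔ _
    rw [hf, hf, e.map_rel_iff]
    rfl

theorem doubling_relIso_apply_inr [Std.Irrefl R] [Std.Trichotomous R]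
    {e : doubling R ≃r doubling R} (he : e none = none) {f : R ≃r R}
    (hf : ∀ a, e (some (.inl a)) = some (.inl (f a))) (b : V) :
    e (some (.inr b)) = some (.inr (f b)) := by
  obtain ⟨c, hc⟩ : ∃ c, some (.inr c) = e (some (.inr b)) := by
    rw [← doubling_none_right_iff (R := R), ← he, e.map_rel_iff]
    trivial
  suffices hcb : c = f b by rw [← hc, hcb]
  refine extensional_of_trichotomous_of_irrefl R (f.surjective.forall.2 fun a ↦ ?_)
  calc R (f a) c ↔ doubling R (e (some (.inr b))) (e (some (.inl a))) := by rw [← hc, hf]; rfl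
    _ ↔ R a b := e.map_rel_iff
    _ ↔ R (f a) (f b) := f.map_rel_iff.symm

theorem exists_eq_doublingCongr [Std.Asymm R] [Std.Trichotomous R] (hR : Relator.BiTotal R)
    (e : doubling R ≃r doubling R) : ∃ f : R ≃r R, e = doublingCongr f := by
  have he := doubling_relIso_apply_none hR e
  obtain ⟨f, hf⟩ := exists_relIso_doubling_apply_inl he
  refine ⟨f, RelIso.ext fun x ↦ ?_⟩
  rcases x with _ | a | b
  · exact he
  · exact hf a
  · exact doubling_relIso_apply_inr he hf b

end Doubling

section OddStep

variable {m : ℕ}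

/-- The rotational relation on `ZMod m` relating `a` to `b` when the representative of `b - a` in
`[0, m)` is odd; it is a tournament for odd `m`. -/
def oddStep (m : ℕ) (a b : ZMod m) : Prop := Odd (b - a).val

/-- Translation by `c`, as an automorphism of `oddStep m`. -/
def oddStepTranslate (c : ZMod m) : oddStep m ≃r oddStep m where
  toEquiv := Equiv.addRight c
  map_rel_iff' := by simp [oddStep]

theorem iterate_doublingCongr_oddStepTranslate (c : ZMod m) (k : ℕ) :
    (doublingCongr (oddStepTranslate c))^[k] = doublingCongr (oddStepTranslate (k • c)) := by
  induction k with
  | zero => funext x; rcases x with _ | a | a <;> simp [doublingCongr, oddStepTranslate]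
  | succ k ih =>
    rw [Function.iterate_succ', ih]
    funext x
    rcases x with _ | a | a <;> simp [doublingCongr, oddStepTranslate, add_mul, add_assoc]

theorem oddStep_biTotal (hm : 1 < m) : Relator.BiTotal (oddStep m) := by
  have : Fact (1 < m) := ⟨hm⟩
  exact ⟨fun a ↦ ⟨a + 1, by simp [oddStep, ZMod.val_one]⟩,
    fun a ↦ ⟨a - 1, by simp [oddStep, ZMod.val_one]⟩⟩

variable [NeZero m]

theorem oddStep_iff (hm : Odd m) {a b : ZMod m} :
    oddStep m a b ↔ (a.val ≤ b.val ↔ Odd (a.val + b.val)) := by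
  have ha := a.val_lt
  rw [oddStep]
  rcases le_or_gt a.val b.val with hab | hba
  · rw [ZMod.val_sub hab]
    grind
  · have hne : a - b ≠ 0 := sub_ne_zero.2 fun h ↦ hba.ne' (congrArg ZMod.val h)
    rw [← neg_sub, ZMod.neg_val, if_neg hne, ZMod.val_sub hba.le]
    grind

theorem oddStep_asymm (hm : Odd m) : Std.Asymm (oddStep m) where
  asymm a b := by grind [oddStep_iff, ZMod.val_injective]

theorem oddStep_trichotomous (hm : Odd m) : Std.Trichotomous (oddStep m) where
  trichotomous a b := by
    have hinj := ZMod.val_injective m (a₁ := a) (a₂ := b)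
    grind [oddStep_iff]

theorem not_oddStep_and_oddStep_sub_two (hm : Odd m) (a z : ZMod m) :
    ¬ (oddStep m a z ∧ oddStep m z (a - 2)) := by
  rintro ⟨haz, hza⟩
  have hlt := (z - a).val_lt
  have hle : (z - a).val ≤ (-2 : ZMod m).val := by
    rw [val_neg_two]
    grind [oddStep]
  rw [oddStep, show a - 2 - z = -2 - (z - a) by ring, ZMod.val_sub hle, val_neg_two] at hza
  grind [oddStep]

theorem oddStep_add_two_of_ne_sub_two (hm : Odd m) {a b : ZMod m} (hab : oddStep m a b)
    (hb : b ≠ a - 2) :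
    oddStep m a (b + 2) ∧ oddStep m (b + 2) b := by
  have hlt := (b - a).val_lt
  have hne : (b - a).val ≠ m - 2 := by
    rw [← val_neg_two]
    exact fun h ↦ hb (by linear_combination ZMod.val_injective m h)
  have hlt' : (b - a).val + 2 < m := by grind [oddStep]
  have hval2 : (2 : ZMod m).val = 2 := by
    rw [ZMod.val_two_eq_two_mod, Nat.mod_eq_of_lt (by omega)]
  constructor
  · rw [oddStep, show b + 2 - a = b - a + 2 by ring, ZMod.val_add_of_lt (by rwa [hval2]), hval2]
    exact hab.add_even even_two
  · rw [oddStep, sub_add_cancel_left, val_neg_two]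
    grind

theorem eq_sub_two_iff_forall_not_oddStep (hm : Odd m) (hm1 : 1 < m) {a b : ZMod m} :
    b = a - 2 ↔ oddStep m a b ∧ ∀ z, ¬ (oddStep m a z ∧ oddStep m z b) := by
  constructor
  · rintro rfl
    refine ⟨?_, not_oddStep_and_oddStep_sub_two hm a⟩
    rw [oddStep, sub_sub_cancel_left, val_neg_two]
    grind
  · rintro ⟨hab, hz⟩
    by_contra hb
    exact hz _ (oddStep_add_two_of_ne_sub_two hm hab hb)

theorem oddStep_relIso_apply_sub_two (hm : Odd m) (hm1 : 1 < m) (f : oddStep m ≃r oddStep m)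
    (a : ZMod m) : f (a - 2) = f a - 2 := by
  rw [eq_sub_two_iff_forall_not_oddStep hm hm1, f.surjective.forall]
  simpa only [f.map_rel_iff] using (eq_sub_two_iff_forall_not_oddStep hm hm1).1 rfl

theorem exists_eq_oddStepTranslate (hm : Odd m) (hm1 : 1 < m) (f : oddStep m ≃r oddStep m) :
    ∃ c, f = oddStepTranslate c := by
  have hcomm : Function.Commute f (· + -2) := fun a ↦ by
    simpa only [sub_eq_add_neg] using oddStep_relIso_apply_sub_two hm hm1 f a
  have hunit : IsUnit (-2 : ZMod m) := by
    simpa using (ZMod.isUnit_iff_coprime 2 m).2 (Nat.coprime_two_left.2 hm)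
  refine ⟨f 0, RelIso.ext fun a ↦ ?_⟩
  obtain ⟨b, rfl⟩ := hunit.dvd (a := a)
  obtain ⟨k, rfl⟩ := ZMod.natCast_zmod_surjective b
  have hk := hcomm.iterate_right k 0
  simp only [add_right_iterate, nsmul_eq_mul, zero_add] at hk
  rw [mul_comm, hk]
  exact add_comm _ _

end OddStep

section Walecki

variable {m : ℕ}

theorem warc_onesSig_iff {x y : WVert m} :
    warc m (onesSig m) x y ↔ ∃ j < m, Cplus m (j : ZMod (2 * m)) x y := by
  simp [warc, onesSig, Fin.exists_iff]

theorem not_warc_onesSig_none_none : ¬ warc m (onesSig m) none none := by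
  simp [warc_onesSig_iff, Cplus]

variable [NeZero m]

theorem exists_eq_add_eq_sub_iff {x y : ZMod (2 * m)} :
    (∃ j < m, ∃ k : ℕ, 1 ≤ k ∧ k ≤ m - 1 ∧ x = (j : ZMod (2 * m)) + k ∧
      y = (j : ZMod (2 * m)) - k) ↔
      x.val ≠ y.val ∧ Even (x.val + y.val) ∧ (x.val + y.val < 2 * m ↔ y.val < x.val) := by
  have hx := x.val_lt
  have hy := y.val_lt
  constructor
  · rintro ⟨j, hj, k, hk1, hkm, hxjk, hyjk⟩
    rw [eq_natCast_add_iff (by omega)] at hxjk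
    rw [eq_natCast_sub_iff (by omega) (by omega)] at hyjk
    grind
  · rintro ⟨hne, ⟨s, hs⟩, h⟩
    obtain ⟨j, k, hj, hk1, hkm, hxjk, hyjk⟩ : ∃ j k, j < m ∧ 1 ≤ k ∧ k ≤ m - 1 ∧
        (j + k = x.val ∨ j + k = x.val + 2 * m) ∧ (y.val + k = j ∨ y.val + k = j + 2 * m) := by
      -- The index `j` is half the sum of the endpoints, since `x + y = 2j` in `ZMod (2 * m)`.
      rcases lt_or_ge s m with hsm | hms
      · exact ⟨s, s - y.val, by omega⟩
      · exact ⟨s - m, s + m - y.val, by omega⟩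
    exact ⟨j, hj, k, hk1, hkm, (eq_natCast_add_iff (by omega)).2 hxjk,
      (eq_natCast_sub_iff (by omega) (by omega)).2 hyjk⟩

theorem exists_eq_sub_eq_add_one_iff {x y : ZMod (2 * m)} :
    (∃ j < m, ∃ k : ℕ, k ≤ m - 1 ∧ x = (j : ZMod (2 * m)) - k ∧
      y = (j : ZMod (2 * m)) + k + 1) ↔
      Odd (x.val + y.val) ∧ (x.val + y.val < 2 * m ↔ x.val < y.val) := by
  have hx := x.val_lt
  have hy := y.val_lt
  have hcast (j k : ℕ) : (j : ZMod (2 * m)) + k + 1 = j + (k + 1 : ℕ) := by push_cast; ring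
  constructor
  · rintro ⟨j, hj, k, hkm, hxjk, hyjk⟩
    rw [eq_natCast_sub_iff (by omega) (by omega)] at hxjk
    rw [hcast, eq_natCast_add_iff (by omega)] at hyjk
    grind
  · rintro ⟨⟨s, hs⟩, h⟩
    obtain ⟨j, k, hj, hkm, hxjk, hyjk⟩ : ∃ j k, j < m ∧ k ≤ m - 1 ∧
        (x.val + k = j ∨ x.val + k = j + 2 * m) ∧
        (j + (k + 1) = y.val ∨ j + (k + 1) = y.val + 2 * m) := by
      rcases lt_or_ge s m with hsm | hms
      · exact ⟨s, s - x.val, by omega⟩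
      · exact ⟨s - m, s + m - x.val, by omega⟩
    exact ⟨j, hj, k, hkm, (eq_natCast_sub_iff (by omega) (by omega)).2 hxjk,
      hcast j k ▸ (eq_natCast_add_iff (by omega)).2 hyjk⟩

theorem warc_onesSig_none_some_iff {y : ZMod (2 * m)} :
    warc m (onesSig m) none (some y) ↔ y.val < m := by
  have hy := y.val_lt
  calc warc m (onesSig m) none (some y)
    _ ↔ ∃ j < m, y = (j : ZMod (2 * m)) + (0 : ℕ) := by simp [warc_onesSig_iff, Cplus]
    _ ↔ ∃ j < m, j + 0 = y.val ∨ j + 0 = y.val + 2 * m :=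
      exists_congr fun j ↦ and_congr_right fun hj ↦ eq_natCast_add_iff (by omega)
    _ ↔ y.val < m := ⟨by omega, fun h ↦ ⟨y.val, h, .inl rfl⟩⟩

theorem warc_onesSig_some_none_iff {x : ZMod (2 * m)} :
    warc m (onesSig m) (some x) none ↔ m ≤ x.val := by
  have hx := x.val_lt
  calc warc m (onesSig m) (some x) none
    _ ↔ ∃ j < m, x = (j : ZMod (2 * m)) + m := by simp [warc_onesSig_iff, Cplus]
    _ ↔ ∃ j < m, j + m = x.val ∨ j + m = x.val + 2 * m :=
      exists_congr fun j ↦ and_congr_right fun hj ↦ eq_natCast_add_iff (by omega)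
    _ ↔ m ≤ x.val := ⟨by omega, fun h ↦ ⟨x.val - m, by omega⟩⟩

theorem warc_onesSig_some_some_iff {x y : ZMod (2 * m)} :
    warc m (onesSig m) (some x) (some y) ↔
      x.val ≠ y.val ∧ (Even (x.val + y.val) ↔ (x.val + y.val < 2 * m ↔ y.val < x.val)) := by
  simp only [warc_onesSig_iff, Cplus, reduceCtorEq, Option.some.injEq, false_and, and_false,
    false_or, and_or_left, exists_or, exists_eq_sub_eq_add_one_iff, exists_eq_add_eq_sub_iff]
  grind

variable (m) in
/-- The labelling of the vertices `0, …, m - 1` of `ZMod (2 * m)` by a first copy of `ZMod m`, and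
of the vertices `2 * m - 1, …, m`, in this order, by a second copy. -/
def halves : ZMod m ⊕ ZMod m ≃ ZMod (2 * m) where
  toFun := Sum.elim (fun a ↦ (a.val : ℕ)) (fun b ↦ (2 * m - 1 - b.val : ℕ))
  invFun x := if x.val < m then .inl (x.val : ℕ) else .inr (2 * m - 1 - x.val : ℕ)
  left_inv x := by
    dsimp only
    rcases x with a | b
    · have ha := a.val_lt
      rw [Sum.elim_inl, ZMod.val_natCast_of_lt (by omega), if_pos ha, ZMod.natCast_zmod_val]
    · have hb := b.val_lt
      rw [Sum.elim_inr, ZMod.val_natCast_of_lt (by omega), if_neg (by omega),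
        Nat.sub_sub_self (by omega), ZMod.natCast_zmod_val]
  right_inv x := by
    have hx := x.val_lt
    dsimp only
    split_ifs with hxm
    · rw [Sum.elim_inl, ZMod.val_natCast_of_lt hxm, ZMod.natCast_zmod_val]
    · rw [Sum.elim_inr, ZMod.val_natCast_of_lt (by omega), Nat.sub_sub_self (by omega),
        ZMod.natCast_zmod_val]

theorem val_halves_inl (a : ZMod m) : (halves m (.inl a)).val = a.val :=
  ZMod.val_natCast_of_lt (a.val_lt.trans_le (by omega))

theorem val_halves_inr (b : ZMod m) : (halves m (.inr b)).val = 2 * m - 1 - b.val :=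
  ZMod.val_natCast_of_lt (by have := b.val_lt; omega)

/-- The isomorphism from the doubling of `oddStep m` to the Walecki tournament `W_{1_m}`. -/
def waleckiIso (hm : Odd m) : doubling (oddStep m) ≃r warc m (onesSig m) where
  toEquiv := (halves m).optionCongr
  map_rel_iff' {x y} := by
    rcases x with _ | a | a <;> rcases y with _ | b | b
    all_goals
      simp only [Equiv.optionCongr_apply, Option.map_none, Option.map_some, doubling,
        oddStep_iff hm, not_warc_onesSig_none_none, warc_onesSig_none_some_iff,
        warc_onesSig_some_none_iff, warc_onesSig_some_some_iff, val_halves_inl, val_halves_inr]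
    all_goals grind [ZMod.val_lt]

theorem halves_inl_add_natCast (a : ZMod m) (k : ℕ) :
    halves m (.inl (a + k)) = ((a.val + k) % m : ℕ) :=
  congrArg Nat.cast (val_add_natCast a k)

theorem halves_inr_add_natCast (b : ZMod m) {k : ℕ} (hk : k ≤ m) :
    halves m (.inr (b + k)) = (m + (2 * m - 1 - b.val - m + (m - k)) % m : ℕ) := by
  have hb := b.val_lt
  have hval : 2 * m - 1 - (b + k).val = m + (2 * m - 1 - b.val - m + (m - k)) % m := by
    rw [val_add_natCast]
    rcases lt_or_ge (b.val + k) m with h | h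
    · rw [Nat.mod_eq_of_lt h,
        show 2 * m - 1 - b.val - m + (m - k) = m - 1 - (b.val + k) + m by omega,
        Nat.add_mod_right, Nat.mod_eq_of_lt (by omega)]
      omega
    · rw [Nat.mod_eq_sub_mod h, Nat.mod_eq_of_lt (by omega), Nat.mod_eq_of_lt (by omega)]
      omega
  exact congrArg Nat.cast hval

theorem semiconj_sigmaFun :
    Function.Semiconj (halves m).optionCongr (doublingCongr (oddStepTranslate 1)) (sigmaFun m) := by
  have hm : 0 < m := NeZero.pos m
  rintro (_ | a | b)
  · rfl
  · change some (halves m (.inl (a + 1))) = sigmaFun m (some (halves m (.inl a)))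
    rw [sigmaFun, val_halves_inl, if_pos a.val_lt, ← halves_inl_add_natCast, Nat.cast_one]
  · have hb := b.val_lt
    change some (halves m (.inr (b + 1))) = sigmaFun m (some (halves m (.inr b)))
    rw [sigmaFun, val_halves_inr, if_neg (by omega), ← halves_inr_add_natCast b (by omega),
      Nat.cast_one]

theorem semiconj_sigmaInvFun :
    Function.Semiconj (halves m).optionCongr (doublingCongr (oddStepTranslate (-1)))
      (sigmaInvFun m) := by
  have hm : 0 < m := NeZero.pos m
  have hneg : ((m - 1 : ℕ) : ZMod m) = -1 := by rw [Nat.cast_pred hm, CharP.cast_eq_zero, zero_sub]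
  rintro (_ | a | b)
  · rfl
  · change some (halves m (.inl (a + -1))) = sigmaInvFun m (some (halves m (.inl a)))
    rw [sigmaInvFun, val_halves_inl, if_pos a.val_lt, ← halves_inl_add_natCast, hneg]
  · have hb := b.val_lt
    change some (halves m (.inr (b + -1))) = sigmaInvFun m (some (halves m (.inr b)))
    rw [sigmaInvFun, val_halves_inr, if_neg (by omega), ← hneg,
      halves_inr_add_natCast b (by omega), Nat.sub_sub_self (by omega)]

theorem semiconj_sigmaZ (t : ℤ) :
    Function.Semiconj (halves m).optionCongr (doublingCongr (oddStepTranslate (t : ZMod m)))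
      (sigmaZ m t) := by
  rw [sigmaZ]
  split_ifs with ht
  · lift t to ℕ using ht
    simpa [iterate_doublingCongr_oddStepTranslate]
      using (semiconj_sigmaFun (m := m)).iterate_right t
  · obtain ⟨k, rfl⟩ : ∃ k : ℕ, t = -k := ⟨(-t).toNat, by omega⟩
    simpa [iterate_doublingCongr_oddStepTranslate]
      using (semiconj_sigmaInvFun (m := m)).iterate_right k

theorem sigmaZ_eq_waleckiIso_conj (hm : Odd m) (t : ℤ) :
    sigmaZ m t =
      ((waleckiIso hm).symm.trans (doublingCongr (oddStepTranslate (t : ZMod m)))).trans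
        (waleckiIso hm) := by
  funext x
  obtain ⟨x, rfl⟩ := (waleckiIso hm).surjective x
  calc sigmaZ m t (waleckiIso hm x)
    _ = waleckiIso hm (doublingCongr (oddStepTranslate (t : ZMod m)) x) :=
      (semiconj_sigmaZ t x).symm
    _ = _ := by simp

theorem exists_coe_eq_sigmaZ (hm : Odd m) (hm1 : 1 < m)
    (e : warc m (onesSig m) ≃r warc m (onesSig m)) : ∃ t : ℤ, ⇑e = sigmaZ m t := by
  have := oddStep_asymm hm
  have := oddStep_trichotomous hm
  obtain ⟨f, hf⟩ := exists_eq_doublingCongr (oddStep_biTotal hm1)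
    (((waleckiIso hm).trans e).trans (waleckiIso hm).symm)
  obtain ⟨c, rfl⟩ := exists_eq_oddStepTranslate hm hm1 f
  obtain ⟨t, rfl⟩ := ZMod.intCast_surjective c
  refine ⟨t, ?_⟩
  rw [sigmaZ_eq_waleckiIso_conj hm, ← hf]
  funext x
  simp

end Walecki

/-- For odd `m ≥ 3`, the automorphism group of `W_{1_m}` is the cyclic
group of order `m` generated by `σ`: a permutation `φ` of the vertices is an
automorphism of `W_{1_m}` iff `φ = σ^t` for some integer `t`. -/
theorem walecki_stmt1 (m : ℕ) (hm : 3 ≤ m) (hodd : Odd m)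
    (φ : WVert m → WVert m) :
    (Function.Bijective φ ∧
      ∀ x y : WVert m, warc m (onesSig m) x y ↔ warc m (onesSig m) (φ x) (φ y))
      ↔ ∃ t : ℤ, φ = sigmaZ m t := by
  have : NeZero m := ⟨by omega⟩
  constructor
  · rintro ⟨hbij, harc⟩
    exact exists_coe_eq_sigmaZ hodd (by omega)
      ⟨Equiv.ofBijective φ hbij, fun {x y} ↦ (harc x y).symm⟩
  · rintro ⟨t, rfl⟩
    rw [sigmaZ_eq_waleckiIso_conj hodd]
    exact ⟨RelIso.bijective _, fun x y ↦ (RelIso.map_rel_iff _).symm⟩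
end

section
/- Let W_u be a Walecki tournament and let a be the arc of W_u between vertices i, j ∈ ZMod n, where i and j have opposite parity. If i, j, and * induce a directed triangle in W_u, then either d(a) > 1, or j = i + m and u = (1_m)R_r for some integer r congruent modulo n to a representative of i or of j. -/
/-!
Extending the signature by `e (s + m) = e s + 1` makes the arc rule uniform: the arc between two
vertices of `ZMod (2 * m)` is governed by the value of `e` at their midpoint.
Write the arc as `a → a + 2k + 1`. If `*` is the only vertex closing a directed triangle on it,
then testing the vertices `a + 2s` and `a + 2s + 1` shows that `e (a + s + 1) = 1` forces
`e (a + s) = 1`, both for `s < k` and for `k < s < m - 1`. Descending from `a + k` and from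
`a + m - 1` gives `e = 1` on the whole window `[a, a + m)`, so `u` is a shift of the all-ones
signature, and `m = 2k + 1` follows from the values at `a + 2k` and `a + 2k + 1`.
-/

/-- The extension of a signature to a sequence `e` with `e (s + m) = e s + 1`. It is indexed by
`ℕ`, standing for representatives of `ZMod (2 * m)`, so that midpoints make sense. -/
def extSig (m : ℕ) [NeZero m] (u : Fin m → ZMod 2) (s : ℕ) : ZMod 2 :=
  u (Fin.ofNat m s) + (s / m : ℕ)

/-- The vertex of `W_u` represented by the natural number `p`. -/
abbrev vert (m p : ℕ) : WVert m := some (p : ZMod (2 * m))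

theorem natCast_inj_of_lt {n p q : ℕ} (hp : p < n) (hq : q < n)
    (h : (p : ZMod n) = q) : p = q := by
  rwa [ZMod.natCast_eq_natCast_iff', Nat.mod_eq_of_lt hp, Nat.mod_eq_of_lt hq] at h

theorem natCast_add_self_eq_zero (m : ℕ) : (m : ZMod (2 * m)) + m = 0 := by
  rw [← two_mul]
  exact_mod_cast ZMod.natCast_self (2 * m)

section Walecki

variable {m : ℕ}

theorem sameParity.symm {x y : ZMod (2 * m)} (h : sameParity m x y) :
    sameParity m y x := by
  obtain ⟨c, hc⟩ := h
  exact ⟨-c, by linear_combination -hc⟩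

theorem natCast_odd_ne_zero (k : ℕ) : ((2 * k + 1 : ℕ) : ZMod (2 * m)) ≠ 0 := by
  rw [Ne, ZMod.natCast_eq_zero_iff]
  exact fun h => absurd ((Nat.dvd_mul_right 2 m).trans h) (by lia)

theorem Cplus_of_add_eq_odd {p q c : ℕ} (hc : p + q = 2 * c + 1) (hpc : p ≤ c)
    (hcp : c < p + m) : Cplus m c (vert m p) (vert m q) := by
  obtain ⟨k, rfl⟩ := Nat.exists_eq_add_of_le hpc
  obtain rfl : q = p + 2 * k + 1 := by lia
  exact Or.inr (Or.inr (Or.inl ⟨k, by lia, congrArg some (by push_cast; ring),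
    congrArg some (by push_cast; ring)⟩))

theorem Cplus_of_add_eq_even {p q c : ℕ} (hc : p + q = 2 * c) (hpc : p < c)
    (hcp : c < p + m) : Cplus m c (vert m q) (vert m p) := by
  obtain ⟨k, rfl⟩ := Nat.exists_eq_add_of_le hpc.le
  obtain rfl : q = p + 2 * k := by lia
  exact Or.inr (Or.inr (Or.inr ⟨k, by lia, by lia, congrArg some (by push_cast; ring),
    congrArg some (by push_cast; ring)⟩))

variable [NeZero m]

theorem exists_eq_add_odd_of_not_sameParity {x y : ZMod (2 * m)} (h : ¬ sameParity m x y) :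
    ∃ k < m, y = x + 2 * k + 1 := by
  have hval : ((y - x).val : ZMod (2 * m)) = y - x := ZMod.natCast_zmod_val _
  have hlt := ZMod.val_lt (y - x)
  obtain ⟨k, hk | hk⟩ := Nat.even_or_odd' (y - x).val <;> rw [hk] at hval <;> push_cast at hval
  · exact absurd ⟨-(k : ZMod (2 * m)), by linear_combination hval⟩ h
  · exact ⟨k, by lia, by linear_combination -hval⟩

section ExtendedSignature

variable {u v : Fin m → ZMod 2}

theorem extSig_val (u : Fin m → ZMod 2) (j : Fin m) : extSig m u j = u j := by
  simp [extSig, Nat.div_eq_of_lt j.isLt]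

theorem extSig_add_m (u : Fin m → ZMod 2) (s : ℕ) : extSig m u (s + m) = extSig m u s + 1 := by
  simp only [extSig, Nat.add_div_right s (NeZero.pos m), Nat.cast_succ, add_assoc]
  congr 2
  exact Fin.ext (Nat.add_mod_right s m)

theorem extSig_periodic (u : Fin m → ZMod 2) : Function.Periodic (extSig m u) (2 * m) := by
  intro s
  rw [two_mul, ← add_assoc, extSig_add_m, extSig_add_m, add_assoc, CharTwo.add_self_eq_zero,
    add_zero]

theorem extSig_congr (u : Fin m → ZMod 2) {s t : ℕ} (h : (s : ZMod (2 * m)) = t) :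
    extSig m u s = extSig m u t := by
  rw [← (extSig_periodic u).map_mod_nat s, (ZMod.natCast_eq_natCast_iff' s t (2 * m)).1 h,
    (extSig_periodic u).map_mod_nat]

theorem eq_of_extSig_eq_on_window {a : ℕ}
    (h : ∀ s < m, extSig m u (a + s) = extSig m v (a + s)) : u = v := by
  funext i
  have hi : Fin.ofNat m (a + (i - Fin.ofNat m a : Fin m)) = i := by
    rw [← Fin.ofNat_add, add_sub_cancel]
  have hs := h _ (i - Fin.ofNat m a).isLt
  simpa only [extSig, hi, add_left_inj] using hs

theorem extSig_onesSig {s : ℕ} (hs : s < m) : extSig m (onesSig m) s = 1 :=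
  extSig_val (onesSig m) ⟨s, hs⟩

theorem extSig_shift1 (u : Fin m → ZMod 2) (s : ℕ) :
    extSig m (shift1 m u) (s + 1) = extSig m u s := by
  have hmod : (Fin.ofNat m (s + 1) : ℕ) = (s % m + 1) % m := (Nat.mod_add_mod s m 1).symm
  rw [extSig, extSig, shift1]
  by_cases hs : s % m + 1 = m
  · rw [hs, Nat.mod_self] at hmod
    have hlast : (⟨m - 1, Nat.sub_lt (NeZero.pos m) Nat.one_pos⟩ : Fin m) = Fin.ofNat m s :=
      Fin.ext (Nat.eq_sub_of_add_eq hs).symm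
    rw [if_pos hmod, hlast, Nat.succ_div_of_mod_eq_zero hmod, Nat.cast_succ]
    linear_combination (1 - u (Fin.ofNat m s)) * CharTwo.two_eq_zero (R := ZMod 2)
  · have hlt : s % m + 1 < m := lt_of_le_of_ne (Nat.mod_lt s (NeZero.pos m)) hs
    rw [Nat.mod_eq_of_lt hlt] at hmod
    have hne : (Fin.ofNat m (s + 1) : ℕ) ≠ 0 := hmod ▸ Nat.succ_ne_zero _
    rw [if_neg hne, Nat.succ_div_of_mod_ne_zero hne]
    congr 2
    exact Fin.ext (Nat.sub_eq_of_eq_add hmod)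

theorem extSig_iterate_shift1 (u : Fin m → ZMod 2) (t s : ℕ) :
    extSig m ((shift1 m)^[t] u) (t + s) = extSig m u s := by
  induction t with
  | zero => rw [Function.iterate_zero_apply, zero_add]
  | succ t ih => rw [Function.iterate_succ_apply', Nat.add_right_comm, extSig_shift1, ih]

theorem eq_Rshift_onesSig_of_extSig_eq_one {a : ℕ} (h : ∀ s < m, extSig m u (a + s) = 1) :
    u = Rshift m a (onesSig m) := by
  rw [Rshift, if_pos (Int.natCast_nonneg a), Int.toNat_natCast]
  refine eq_of_extSig_eq_on_window (a := a) fun s hs => ?_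
  rw [h s hs, extSig_iterate_shift1, extSig_onesSig hs]

end ExtendedSignature

section Cycles

variable {c c' : ZMod (2 * m)} {x y : WVert m}

theorem Cplus.reverse (h : Cplus m c x y) : Cplus m (c + m) y x := by
  have hm := natCast_add_self_eq_zero m
  rcases h with ⟨rfl, rfl⟩ | ⟨rfl, rfl⟩ | ⟨k, hk, rfl, rfl⟩ | ⟨k, hk₀, hk, rfl, rfl⟩
  · exact Or.inr (Or.inl ⟨congrArg some (by linear_combination -hm), rfl⟩)
  · exact Or.inl ⟨rfl, rfl⟩
  · have hl : ((m - 1 - k : ℕ) : ZMod (2 * m)) = m - 1 - k := by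
      rw [Nat.cast_sub hk, Nat.cast_sub NeZero.one_le, Nat.cast_one]
    refine Or.inr (Or.inr (Or.inl ⟨m - 1 - k, Nat.sub_le _ _, ?_, ?_⟩)) <;> rw [hl]
    · exact congrArg some (by ring)
    · exact congrArg some (by linear_combination -hm)
  · have hl : ((m - k : ℕ) : ZMod (2 * m)) = m - k := Nat.cast_sub (by lia)
    refine Or.inr (Or.inr (Or.inr ⟨m - k, by lia, by lia, ?_, ?_⟩)) <;> rw [hl]
    · exact congrArg some (by linear_combination -hm)
    · exact congrArg some (by ring)

theorem Cplus.center_unique (h : Cplus m c x y) (h' : Cplus m c' x y) : c = c' := by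
  have hm := NeZero.pos m
  rcases h with ⟨rfl, rfl⟩ | ⟨rfl, rfl⟩ | ⟨k, hk, rfl, rfl⟩ | ⟨k, _, hk, rfl, rfl⟩ <;>
    rcases h' with ⟨hx, hy⟩ | ⟨hx, hy⟩ | ⟨l, hl, hx, hy⟩ | ⟨l, _, hl, hx, hy⟩ <;>
    simp only [reduceCtorEq, Option.some.injEq] at hx hy
  · exact hy
  · exact add_right_cancel hx
  · have hkl : 2 * k + 1 = 2 * l + 1 := natCast_inj_of_lt (n := 2 * m) (by lia) (by lia) (by
      push_cast
      linear_combination hy - hx)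
    obtain rfl : k = l := by lia
    exact sub_left_injective hx
  · exact absurd (by push_cast; linear_combination hy - hx) (natCast_odd_ne_zero (m := m) (k + l))
  · exact absurd (by push_cast; linear_combination hx - hy) (natCast_odd_ne_zero (m := m) (k + l))
  · have hkl : 2 * k = 2 * l := natCast_inj_of_lt (n := 2 * m) (by lia) (by lia) (by
      push_cast
      linear_combination hx - hy)
    obtain rfl : k = l := by lia
    exact add_right_cancel hx

end Cycles

section Arcs

variable {u : Fin m → ZMod 2} {x y : WVert m}

theorem warc_of_Cplus {c : ℕ} (h : Cplus m c x y) (hu : extSig m u c = 1) : warc m u x y := by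
  rw [← (extSig_periodic u).map_mod_nat] at hu
  rw [← ZMod.natCast_mod] at h
  have hlt : c % (2 * m) < 2 * m := Nat.mod_lt _ (NeZero.pos _)
  generalize c % (2 * m) = r at h hu hlt
  obtain hr | ⟨j, rfl⟩ := (lt_or_ge r m).imp_right Nat.exists_eq_add_of_le'
  · exact ⟨⟨r, hr⟩, Or.inl ⟨by rwa [← extSig_val u], h⟩⟩
  · have hj : j < m := by lia
    rw [extSig_add_m, add_eq_right] at hu
    refine ⟨⟨j, hj⟩, Or.inr ⟨by rwa [← extSig_val u], ?_⟩⟩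
    have hrev := h.reverse
    rwa [Nat.cast_add, add_assoc, natCast_add_self_eq_zero, add_zero] at hrev

theorem warc_iff_of_Cplus {c : ℕ} (h : Cplus m c x y) : warc m u x y ↔ extSig m u c = 1 := by
  refine ⟨?_, warc_of_Cplus h⟩
  rintro ⟨j, ⟨hu, hj⟩ | ⟨hu, hj⟩⟩
  · rw [extSig_congr u (h.center_unique hj), extSig_val, hu]
  · have hc : (c : ZMod (2 * m)) = (j + m : ℕ) := by
      rw [h.center_unique hj.reverse, Nat.cast_add]
    rw [extSig_congr u hc, extSig_add_m, extSig_val, hu, zero_add]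

theorem warc_reverse_iff_of_Cplus {c : ℕ} (h : Cplus m c x y) :
    warc m u y x ↔ extSig m u c = 0 := by
  have hrev : Cplus m (c + m : ℕ) y x := by rw [Nat.cast_add]; exact h.reverse
  rw [warc_iff_of_Cplus hrev, extSig_add_m, add_eq_right]

theorem warc.asymm (h : warc m u x y) : ¬ warc m u y x := by
  obtain ⟨j, ⟨hu, hj⟩ | ⟨hu, hj⟩⟩ := h
  · rw [warc_reverse_iff_of_Cplus hj, extSig_val, hu]
    exact one_ne_zero
  · rw [warc_iff_of_Cplus hj, extSig_val, hu]
    exact zero_ne_one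

theorem warc_star_right_iff {p : ℕ} : warc m u (vert m p) none ↔ extSig m u p = 0 :=
  warc_reverse_iff_of_Cplus (Or.inl ⟨rfl, rfl⟩)

theorem warc_iff_of_add_eq_odd {p q c : ℕ} (hc : p + q = 2 * c + 1) (hpc : p ≤ c)
    (hcp : c < p + m) : warc m u (vert m p) (vert m q) ↔ extSig m u c = 1 :=
  warc_iff_of_Cplus (Cplus_of_add_eq_odd hc hpc hcp)

theorem warc_reverse_iff_of_add_eq_odd {p q c : ℕ} (hc : p + q = 2 * c + 1) (hpc : p ≤ c)
    (hcp : c < p + m) : warc m u (vert m q) (vert m p) ↔ extSig m u c = 0 :=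
  warc_reverse_iff_of_Cplus (Cplus_of_add_eq_odd hc hpc hcp)

theorem warc_iff_of_add_eq_even {p q c : ℕ} (hc : p + q = 2 * c) (hpc : p < c)
    (hcp : c < p + m) : warc m u (vert m p) (vert m q) ↔ extSig m u c = 0 :=
  warc_reverse_iff_of_Cplus (Cplus_of_add_eq_even hc hpc hcp)

theorem warc_reverse_iff_of_add_eq_even {p q c : ℕ} (hc : p + q = 2 * c) (hpc : p < c)
    (hcp : c < p + m) : warc m u (vert m q) (vert m p) ↔ extSig m u c = 1 :=
  warc_iff_of_Cplus (Cplus_of_add_eq_even hc hpc hcp)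

theorem warc.one_lt_dcount (hxy : warc m u x y) {z w : WVert m} (hzw : z ≠ w)
    (hyz : warc m u y z) (hzx : warc m u z x) (hyw : warc m u y w) (hwx : warc m u w x) :
    1 < dcount (warc m u) x y := by
  have hmem : ∀ {t}, warc m u y t → warc m u t x →
      t ≠ x ∧ t ≠ y ∧ warc m u y t ∧ warc m u t x := fun hyt htx =>
    ⟨fun h => hxy.asymm (h ▸ hyt), fun h => hxy.asymm (h ▸ htx), hyt, htx⟩
  exact (Set.one_lt_ncard_iff (Set.toFinite _)).2 ⟨z, w, hmem hyz hzx, hmem hyw hwx, hzw⟩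

end Arcs

section Window

variable {u : Fin m → ZMod 2} {a k s : ℕ}

/-- No vertex other than `*` closes a directed triangle on the arc from `p` to `q`. -/
def NoClosingVertex (m : ℕ) (u : Fin m → ZMod 2) (p q : ℕ) : Prop :=
  ∀ z, warc m u (vert m q) (vert m z) → ¬ warc m u (vert m z) (vert m p)

namespace NoClosingVertex

theorem extSig_add_eq_one_of_le (hno : NoClosingVertex m u a (a + 2 * k + 1)) (hk : k < m)
    (hs₀ : 0 < s) (hs : s ≤ k) (h : extSig m u (a + s) = 1) : extSig m u (a + s + k) = 1 := by
  have hza : warc m u (vert m (a + 2 * s)) (vert m a) :=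
    (warc_reverse_iff_of_add_eq_even (by lia) (by lia) (by lia)).2 h
  exact Fin.eq_one_of_ne_zero _ fun h₀ => hno (a + 2 * s)
    ((warc_reverse_iff_of_add_eq_odd (by lia) (by lia) (by lia)).2 h₀) hza

theorem extSig_add_eq_zero_of_gt (hno : NoClosingVertex m u a (a + 2 * k + 1))
    (hks : k < s) (hs : s < m) (h : extSig m u (a + s) = 1) : extSig m u (a + s + k) = 0 := by
  have hza : warc m u (vert m (a + 2 * s)) (vert m a) :=
    (warc_reverse_iff_of_add_eq_even (by lia) (by lia) (by lia)).2 h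
  by_contra h₀
  exact hno (a + 2 * s) ((warc_iff_of_add_eq_odd (by lia) (by lia) (by lia)).2
    (Fin.eq_one_of_ne_zero _ h₀)) hza

theorem extSig_eq_one_of_lt (hno : NoClosingVertex m u a (a + 2 * k + 1)) (hk : k < m)
    (hs : s < k) (h : extSig m u (a + s + k + 1) = 1) : extSig m u (a + s) = 1 := by
  have hbz : warc m u (vert m (a + 2 * k + 1)) (vert m (a + 2 * s + 1)) :=
    (warc_reverse_iff_of_add_eq_even (by lia) (by lia) (by lia)).2 h
  exact Fin.eq_one_of_ne_zero _ fun h₀ => hno _ hbz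
    ((warc_reverse_iff_of_add_eq_odd (by lia) (by lia) (by lia)).2 h₀)

theorem extSig_eq_one_of_gt (hno : NoClosingVertex m u a (a + 2 * k + 1))
    (hks : k < s) (hs : s < m) (h : extSig m u (a + s + k + 1) = 0) :
    extSig m u (a + s) = 1 := by
  have hbz : warc m u (vert m (a + 2 * k + 1)) (vert m (a + 2 * s + 1)) :=
    (warc_iff_of_add_eq_even (by lia) (by lia) (by lia)).2 h
  exact Fin.eq_one_of_ne_zero _ fun h₀ => hno _ hbz
    ((warc_reverse_iff_of_add_eq_odd (by lia) (by lia) (by lia)).2 h₀)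

theorem extSig_eq_one (hno : NoClosingVertex m u a (a + 2 * k + 1)) (hk : k < m)
    (hak : extSig m u (a + k) = 1) (hs : s < m) : extSig m u (a + s) = 1 := by
  rcases le_or_gt s k with hsk | hks
  · refine Nat.decreasingInduction' (P := fun r => extSig m u (a + r) = 1) ?_ hsk hak
    intro r hr _ hsucc
    have hsucc_k := hno.extSig_add_eq_one_of_le hk r.add_one_pos hr hsucc
    rw [← add_assoc, add_right_comm] at hsucc_k
    exact hno.extSig_eq_one_of_lt hk hr hsucc_k
  · refine Nat.decreasingInduction' (P := fun r => extSig m u (a + r) = 1) ?_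
      (Nat.le_sub_one_of_lt hs) ?_
    · intro r hr hsr hsucc
      have hsucc_k := hno.extSig_add_eq_zero_of_gt (by lia) (by lia) hsucc
      rw [← add_assoc, add_right_comm] at hsucc_k
      exact hno.extSig_eq_one_of_gt (by lia) (by lia) hsucc_k
    · refine hno.extSig_eq_one_of_gt (by lia) (by lia) ?_
      rw [show a + (m - 1) + k + 1 = a + k + m by lia, extSig_add_m, hak]
      decide

theorem eq_two_mul_add_one (hno : NoClosingVertex m u a (a + 2 * k + 1)) (hk : k < m)
    (hak : extSig m u (a + k) = 1) (hb : extSig m u (a + 2 * k + 1) = 0) : m = 2 * k + 1 := by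
  have hwindow : ∀ s < m, extSig m u (a + s) = 1 := fun s hs => hno.extSig_eq_one hk hak hs
  have hle : m ≤ 2 * k + 1 := by
    by_contra! hlt
    exact zero_ne_one (hb.symm.trans (hwindow _ hlt))
  have hgt : 2 * k < m := by
    by_contra! hge
    have h2k := hno.extSig_add_eq_one_of_le hk (by lia) le_rfl hak
    obtain ⟨r, hr⟩ := Nat.exists_eq_add_of_le' hge
    rw [show a + k + k = a + r + m by lia, extSig_add_m, hwindow r (by lia)] at h2k
    exact absurd h2k (by decide)
  lia

end NoClosingVertex

end Window

section Triangle

variable {u : Fin m → ZMod 2} {i j : ZMod (2 * m)}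

theorem one_lt_dcount_or_eq_Rshift_onesSig (hpar : ¬ sameParity m i j)
    (hij : warc m u (some i) (some j)) (hj : warc m u (some j) none)
    (hi : warc m u none (some i)) :
    1 < dcount (warc m u) (some i) (some j) ∨
      j = i + m ∧ ∃ r : ℤ, u = Rshift m r (onesSig m) ∧ (r : ZMod (2 * m)) = i := by
  refine or_iff_not_imp_left.2 fun hd => ?_
  obtain ⟨k, hk, rfl⟩ := exists_eq_add_odd_of_not_sameParity hpar
  obtain ⟨a, rfl⟩ : ∃ a : ℕ, i = a := ⟨i.val, (ZMod.natCast_zmod_val i).symm⟩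
  have hb : (a : ZMod (2 * m)) + 2 * k + 1 = (a + 2 * k + 1 : ℕ) := by push_cast; rfl
  rw [hb] at hij hj hd
  have hno : NoClosingVertex m u a (a + 2 * k + 1) := fun z hbz hza =>
    hd (hij.one_lt_dcount (Option.some_ne_none _).symm hj hi hbz hza)
  have hak : extSig m u (a + k) = 1 :=
    (warc_iff_of_add_eq_odd (by lia) (by lia) (by lia)).1 hij
  have hm : m = 2 * k + 1 := hno.eq_two_mul_add_one hk hak (warc_star_right_iff.1 hj)
  refine ⟨?_, a, eq_Rshift_onesSig_of_extSig_eq_one fun s => hno.extSig_eq_one hk hak,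
    Int.cast_natCast a⟩
  rw [hb, add_assoc, ← hm, Nat.cast_add]

end Triangle

end Walecki

/-- Let `a` be the arc of `W_u` between `i` and `j` of opposite
parity. If `i`, `j`, `*` induce a directed triangle in `W_u`, then either
`d(a) > 1`, or `j = i + m` and `u = (1_m)R_r` for some integer `r` congruent
modulo `n` to a representative of `i` or of `j`. -/
theorem walecki_stmt13 (m : ℕ) (hm : 1 ≤ m) (u : Fin m → ZMod 2)
    (i j : ZMod (2 * m))
    (hpar : ¬ sameParity m i j)
    (x y : WVert m)
    (hxy : (x = some i ∧ y = some j) ∨ (x = some j ∧ y = some i))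
    (ha : warc m u x y)
    (htri : dirTri (warc m u) (some i) (some j) none) :
    1 < dcount (warc m u) x y ∨
      (j = i + (m : ZMod (2 * m)) ∧
        ∃ r : ℤ, u = Rshift m r (onesSig m) ∧
          ((r : ZMod (2 * m)) = i ∨ (r : ZMod (2 * m)) = j)) := by
  have : NeZero m := ⟨Nat.one_le_iff_ne_zero.1 hm⟩
  obtain ⟨-, -, -, ⟨hij, hj, hi⟩ | ⟨hi, hj, hji⟩⟩ := htri
  · obtain ⟨rfl, rfl⟩ | ⟨rfl, rfl⟩ := hxy
    · refine (one_lt_dcount_or_eq_Rshift_onesSig hpar hij hj hi).imp_right ?_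
      exact fun ⟨hji, r, hu, hr⟩ => ⟨hji, r, hu, Or.inl hr⟩
    · exact absurd ha hij.asymm
  · obtain ⟨rfl, rfl⟩ | ⟨rfl, rfl⟩ := hxy
    · exact absurd ha hji.asymm
    · refine (one_lt_dcount_or_eq_Rshift_onesSig (fun h => hpar h.symm) hji hi hj).imp_right ?_
      rintro ⟨rfl, r, hu, hr⟩
      exact ⟨by rw [add_assoc, natCast_add_self_eq_zero, add_zero], r, hu, Or.inr hr⟩
end

section
/- Let m ≥ 3 and let u, v ∈ (ZMod 2)^m be signatures such that the Walecki tournament W_u contains an arc a with d(a) = 1. Then every isomorphism from W_u to W_v maps the vertex * of W_u to the vertex * of W_v; in particular, every automorphism of W_u fixes the vertex *. -/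
/-!
`W_u` is regular, so `d(a)` exceeds by one the number of directed paths `x → w → y` along an arc
`a = (x, y)`. Hence `d(a) = 1` forbids all these paths. Extend the signature to all integers by
`u_{c+m} = 1 - u_c`, so that `u_c` decides the direction of every arc whose endpoints have midpoint
`c` or `c + 1/2`. Each forbidden path then is a constraint on `u`, and together they show that the
third vertex of the only triangle through `a`, its apex, is `*`, with two exceptions.
* Arcs at `*`: here `u` obeys a doubling rule, which forces `m = 5` and a specific `u`. Then `*` is
  the middle vertex of two consecutive arcs with `d = 1`, which no other vertex is for odd `m`.
* Exceptional arcs, where `m` is even and `u` is constant on half a period. Then several arcs have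
  apex `*`, whereas any other vertex is the apex of at most one exceptional arc.

An isomorphism preserves `d` and apexes, so it cannot move `*` to any other vertex.
-/

namespace Walecki

section Tournament

variable {α β : Type*} {r : α → α → Prop} {s : β → β → Prop} {x y z w : α}

/-- The arc `(x, y)` lies on exactly one directed triangle, whose third vertex is `z`. For
irreflexive `r` this is `d(x, y) = 1` with the apex named; the side conditions `z ≠ x, y` of
`dcount` are then automatic and are left out. -/
def IsUniqueApex (r : α → α → Prop) (x y z : α) : Prop :=
  r x y ∧ ∀ w, r y w ∧ r w x ↔ w = z

theorem exists_isUniqueApex_of_dcount_eq_one [Std.Irrefl r] (hxy : r x y)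
    (hd : dcount r x y = 1) : ∃ z, IsUniqueApex r x y z := by
  obtain ⟨z, hz⟩ := Set.ncard_eq_one.1 hd
  refine ⟨z, hxy, fun w => ?_⟩
  rw [← Set.mem_singleton_iff, ← hz, Set.mem_ofPred_eq]
  refine ⟨fun ⟨hyw, hwx⟩ => ⟨?_, ?_, hyw, hwx⟩, fun h => h.2.2⟩
  · rintro rfl
    exact irrefl_of r _ hwx
  · rintro rfl
    exact irrefl_of r _ hyw

namespace IsUniqueApex

theorem rel (h : IsUniqueApex r x y z) : r x y := h.1

theorem rel_right (h : IsUniqueApex r x y z) : r y z := ((h.2 z).2 rfl).1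

theorem rel_left (h : IsUniqueApex r x y z) : r z x := ((h.2 z).2 rfl).2

theorem eq_apex (h : IsUniqueApex r x y z) (hyw : r y w) (hwx : r w x) : w = z :=
  (h.2 w).1 ⟨hyw, hwx⟩

theorem swap (h : IsUniqueApex r x y z) : IsUniqueApex (Function.swap r) y x z :=
  ⟨h.1, fun w => and_comm.trans (h.2 w)⟩

theorem map (h : IsUniqueApex r x y z) (φ : r ≃r s) : IsUniqueApex s (φ x) (φ y) (φ z) := by
  refine ⟨φ.map_rel_iff.2 h.1, fun w => ?_⟩
  obtain ⟨w, rfl⟩ := φ.surjective w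
  rw [φ.map_rel_iff, φ.map_rel_iff, φ.injective.eq_iff, h.2]

/-- In a regular tournament `d(x, y) = b(x, y) + 1`, so a unique apex excludes every directed path
`x → w → y`. -/
theorem not_rel_of_rel [Finite α] [Std.Asymm r] [Std.Trichotomous r] (h : IsUniqueApex r x y z)
    (hdeg : {v | r x v}.ncard ≤ {v | r y v}.ncard) (hxw : r x w) : ¬ r w y := by
  intro hwy
  have hy : {v | r y v} ⊆ insert z {v | r x v ∧ r y v} := fun v hyv => by
    rcases trichotomous_of r x v with hxv | rfl | hvx
    · exact Or.inr ⟨hxv, hyv⟩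
    · exact absurd hyv (asymm_of r h.rel)
    · exact Or.inl (h.eq_apex hyv hvx)
  have hx : insert y (insert w {v | r x v ∧ r y v}) ⊆ {v | r x v} := by
    rintro v (rfl | rfl | hv)
    exacts [h.rel, hxw, hv.1]
  have hy' := (Set.ncard_le_ncard hy).trans (Set.ncard_insert_le _ _)
  have hx' := Set.ncard_le_ncard hx
  rw [Set.ncard_insert_of_notMem, Set.ncard_insert_of_notMem] at hx'
  · omega
  · exact fun hw => asymm_of r hwy hw.2
  · rintro (rfl | hy)
    exacts [irrefl_of r _ hwy, irrefl_of r _ hy.2]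

end IsUniqueApex

end Tournament

section Patterns

theorem eq_of_two_periods {α : Type*} (f : ℤ → α) {k l : ℤ} (hk : 0 < k) (hl : 0 < l)
    (hfk : ∀ p, 0 < p → p < l → f p = f (p + k)) (hfl : ∀ p, 0 < p → p < k → f p = f (p + l)) :
    f k = f l := by
  induction hn : (k + l).toNat using Nat.strong_induction_on generalizing k l with | _ n ih =>
  -- The Euclidean algorithm on `(k, l)`: the smaller period also shortens the larger one.
  rcases lt_trichotomy k l with hkl | rfl | hkl
  · have hlast := hfk (l - k) (by omega) (by omega)
    rw [sub_add_cancel] at hlast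
    rw [← hlast]
    refine ih _ (by omega) hk (by omega) (fun p h0 h1 => hfk p h0 (by omega))
      (fun p h0 h1 => ?_) rfl
    rw [hfl p h0 h1, hfk (p + (l - k)) (by omega) (by omega)]
    congr 1; ring
  · rfl
  · have hlast := hfl (k - l) (by omega) (by omega)
    rw [sub_add_cancel] at hlast
    rw [← hlast]
    refine ih _ (by omega) (by omega) hl (fun p h0 h1 => ?_)
      (fun p h0 h1 => hfl p h0 (by omega)) rfl
    rw [hfk p h0 h1, hfl (p + (k - l)) (by omega) (by omega)]
    congr 1; ring

variable {f : ℤ → Prop} {k l m : ℤ}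

theorem of_succ_of_le (hf : ∀ p, k ≤ p → p < l → f p → f (p + 1)) {p q : ℤ} (hkp : k ≤ p)
    (hpq : p ≤ q) (hql : q ≤ l) (hp : f p) : f q := by
  induction q, hpq using Int.leInduction with
  | base => exact hp
  | succ q hq ih => exact hf q (by omega) (by omega) (ih (by omega))

theorem block_of_or_of_not_and (hl : 0 ≤ l) (hlk : l < k) (hk : 2 ≤ k)
    (hork : ∀ p, 1 ≤ p → p ≤ l → f p ∨ f (p + k)) (horl : ∀ p, 1 ≤ p → p ≤ k → f p ∨ f (p + l))
    (hand : ∀ p, 1 ≤ p → p < k → ¬ (f p ∧ f (p + l + 1))) (hmid : ¬ (f (k + 1) ∧ f (l + 1))) :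
    k = l + 1 ∧ (∀ p, 1 ≤ p → p ≤ k → f p) ∧ ∀ p, k + 1 ≤ p → p ≤ k + l → ¬ f p := by
  have hsucc : ∀ p, 1 ≤ p → p < k → f p → f (p + 1) := fun p h1 hpk hp => by
    have h := horl (p + 1) (by omega) (by omega)
    rw [add_right_comm] at h
    exact h.resolve_right fun h' => hand p h1 hpk ⟨hp, h'⟩
  have hnsucc : ∀ p, l + 1 ≤ p → p < k + l → ¬ f p → ¬ f (p + 1) := fun p hlp hpk hp h' => by
    have h := horl (p - l) (by omega) (by omega)
    rw [sub_add_cancel] at h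
    refine hand (p - l) (by omega) (by omega) ⟨h.resolve_right hp, ?_⟩
    rwa [sub_add_cancel]
  have hl0 : l ≠ 0 := by
    rintro rfl
    simp only [add_zero, or_self] at horl hand
    exact hand 1 le_rfl (by omega) ⟨horl 1 le_rfl (by omega), horl 2 (by omega) hk⟩
  have hor1 : f 1 ∨ f (k + 1) := by simpa only [add_comm] using hork 1 le_rfl (by omega)
  have hfk : f k := by
    by_contra hnk
    exact hor1.elim (fun h1 => hnk (of_succ_of_le hsucc le_rfl (by omega) le_rfl h1))
      (hnsucc k (by omega) (by omega) hnk)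
  have hfl : f (l + 1) := by
    by_contra hnl
    exact of_succ_of_le (f := fun p => ¬ f p) hnsucc le_rfl (by omega) (by omega) hnl hfk
  have hfk1 : ¬ f (k + 1) := fun h => hmid ⟨h, hfl⟩
  have hlow : ∀ p, 1 ≤ p → p ≤ k → f p := fun p h1 hpk =>
    of_succ_of_le hsucc le_rfl h1 hpk (hor1.resolve_right hfk1)
  refine ⟨?_, hlow, fun p hkp hpl =>
    of_succ_of_le (f := fun p => ¬ f p) hnsucc (by omega) hkp hpl hfk1⟩
  by_contra hkl
  exact hand 1 le_rfl (by omega) ⟨hlow 1 le_rfl (by omega), hlow _ (by omega) (by omega)⟩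

theorem eq_five_of_antiperiodic_of_doubling (hm : 3 ≤ m) (hanti : ∀ p, f (p + m) ↔ ¬ f p)
    (heven : ∀ i, 1 ≤ i → i < m → f i → ¬ f (2 * i))
    (hodd : ∀ i, 0 ≤ i → i < m → f (2 * i + 1) → f i) :
    m = 5 ∧ f 1 ∧ ¬ f 2 ∧ f 3 ∧ f 4 := by
  have hcomp : ∀ i, 1 ≤ i → i < m → f i → f (2 * i - m) := fun i h1 hi hfi => by
    by_contra h
    rw [← hanti, sub_add_cancel] at h
    exact heven i h1 hi hfi h
  have h1 : f (m - 1) := by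
    by_contra h
    rw [← hanti] at h
    refine (hanti _).1 h (hodd _ (by omega) (by omega) ?_)
    convert h using 1; ring
  have h2 : f (m - 2) := by
    convert hcomp _ (by omega) (by omega) h1 using 1; ring
  have h4 : f (m - 4) := by
    convert hcomp _ (by omega) (by omega) h2 using 1; ring
  obtain ⟨b, rfl | rfl⟩ := Int.even_or_odd' m
  · refine absurd (hodd (b - 1) (by omega) (by omega) ?_) fun h =>
      heven _ (by omega) (by omega) h ?_
    · convert h1 using 1; ring
    · convert h2 using 1; ring
  have hb1 : b ≠ 1 := by
    rintro rfl
    exact heven 1 le_rfl (by omega) h2 h1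
  have hb3 : ¬ 3 ≤ b := fun hb => by
    have hfb1 : f (b - 1) := hodd (b - 1) (by omega) (by omega) (by convert h2 using 1; ring)
    have hfb2 : f (b - 2) := hodd (b - 2) (by omega) (by omega) (by convert h4 using 1; ring)
    have h3 : ¬ f (2 * b + 1 - 3) := by
      convert heven _ (by omega) (by omega) hfb1 using 2; ring
    have h5 : ¬ f (2 * b + 1 - 5) := by
      convert heven _ (by omega) (by omega) hfb2 using 2; ring
    refine h3 (hodd _ (by omega) (by omega) ?_)
    rw [← hanti] at h5
    convert h5 using 1; ring
  obtain rfl : b = 2 := by omega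
  exact ⟨rfl, h4, heven 1 le_rfl (by omega) h4, h2, h1⟩

end Patterns

section Vertices

variable {m : ℕ} {a b : ℤ} {z : WVert m}

/-- The vertex `a mod 2m` of a Walecki tournament. Vertices are named by integer representatives so
that midpoints `(a + b) / 2`, which `ZMod (2 * m)` leaves ambiguous, make sense. -/
def vtx (m : ℕ) (a : ℤ) : WVert m := some (a : ZMod (2 * m))

theorem vtx_ne_none : vtx m a ≠ none := Option.some_ne_none _

theorem vtx_eq_vtx_iff : vtx m a = vtx m b ↔ (2 * m : ℤ) ∣ b - a := by
  rw [vtx, vtx, Option.some_inj, ZMod.intCast_eq_intCast_iff_dvd_sub, Nat.cast_mul, Nat.cast_two]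

theorem eq_of_vtx_eq_vtx (h : vtx m a = vtx m b) (hab : |b - a| < 2 * m) : a = b :=
  (sub_eq_zero.1 (Int.eq_zero_of_abs_lt_dvd (vtx_eq_vtx_iff.1 h) hab)).symm

theorem vtx_eq_vtx_of_eq_add (h : b = a + 2 * m) : vtx m a = vtx m b :=
  vtx_eq_vtx_iff.2 ⟨1, by rw [h]; ring⟩

theorem vtx_add_eq_vtx_add (h : vtx m a = vtx m b) (c : ℤ) : vtx m (a + c) = vtx m (b + c) := by
  rwa [vtx_eq_vtx_iff, add_sub_add_right_eq_sub, ← vtx_eq_vtx_iff]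

theorem emod_two_eq_of_vtx_eq_vtx (h : vtx m a = vtx m b) : a % 2 = b % 2 :=
  (Int.modEq_iff_dvd.2 (vtx_eq_vtx_iff.1 h)).of_dvd (dvd_mul_right 2 _)

theorem exists_eq_add_of_vtx_eq_vtx {a' b' : ℤ} (ha : vtx m a = vtx m a') (hb : vtx m b = vtx m b')
    (hab : |b' - a' - (b - a)| < 2 * m) :
    ∃ t : ℤ, a' - a = 2 * m * t ∧ b' - b = 2 * m * t := by
  obtain ⟨t, ht⟩ := vtx_eq_vtx_iff.1 ha
  have hdvd : (2 * m : ℤ) ∣ b' - a' - (b - a) := by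
    rw [sub_sub_sub_comm]
    exact dvd_sub (vtx_eq_vtx_iff.1 hb) (vtx_eq_vtx_iff.1 ha)
  exact ⟨t, ht, by linear_combination ht + Int.eq_zero_of_abs_lt_dvd hdvd hab⟩

theorem exists_eq_vtx_of_ne_none (hz : z ≠ none) : ∃ a, z = vtx m a := by
  obtain ⟨x, rfl⟩ := Option.ne_none_iff_exists'.1 hz
  obtain ⟨a, rfl⟩ := ZMod.intCast_surjective x
  exact ⟨a, rfl⟩

theorem eq_none_or_exists_eq_vtx [NeZero m] (a : ℤ) (z : WVert m) :
    z = none ∨ ∃ i : ℤ, 0 ≤ i ∧ i < m ∧ (z = vtx m (a + 2 * i) ∨ z = vtx m (a + 2 * i + 1)) := by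
  refine or_iff_not_imp_left.2 fun hz => ?_
  obtain ⟨b, rfl⟩ := exists_eq_vtx_of_ne_none hz
  have hpos : (0 : ℤ) < 2 * m := by have := NeZero.pos m; omega
  have hr0 := Int.emod_nonneg (b - a) hpos.ne'
  have hr1 := Int.emod_lt_of_pos (b - a) hpos
  have hb : vtx m b = vtx m (a + (b - a) % (2 * m)) :=
    vtx_eq_vtx_iff.2 ⟨-((b - a) / (2 * m)), by
      linear_combination Int.emod_add_mul_ediv (b - a) (2 * m)⟩
  obtain ⟨i, hi | hi⟩ := Int.even_or_odd' ((b - a) % (2 * m))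
  · exact ⟨i, by omega, by omega, Or.inl (by rw [hb, hi])⟩
  · exact ⟨i, by omega, by omega, Or.inr (by rw [hb, hi, add_assoc])⟩

end Vertices

section Arcs

variable {m : ℕ} {u : Fin m → ZMod 2} {a b c : ℤ} {x y z w : WVert m}

/-- The signature extended to all integers by the rule `u_{c+m} = 1 - u_c`, read as the proposition
`u_c = 1`. Since `C_{c+m}⁺` is the reverse of `C_c⁺`, it says that `C_c⁺` is one of the directed
Hamilton cycles that make up `W_u`. -/
def extSig (u : Fin m → ZMod 2) (c : ℤ) : Prop :=
  ∃ j : Fin m, (u j = 1 ∧ vtx m c = vtx m (j : ℕ)) ∨ (u j = 0 ∧ vtx m c = vtx m ((j : ℕ) + m))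

theorem extSig_congr (h : vtx m a = vtx m b) : extSig u a ↔ extSig u b := by
  unfold extSig
  rw [h]

theorem warc_one_sub : warc m (1 - u) = Function.swap (warc m u) := by
  have hone (w : ZMod 2) : 1 - w = 1 ↔ w = 0 := by revert w; decide
  have hzero (w : ZMod 2) : 1 - w = 0 ↔ w = 1 := by revert w; decide
  ext x y
  simp only [warc, Function.swap, Pi.sub_apply, Pi.one_apply, hone, hzero, or_comm]

theorem extSig_fin_iff (j : Fin m) : extSig u (j : ℕ) ↔ u j = 1 := by
  refine ⟨?_, fun hu => ⟨j, Or.inl ⟨hu, rfl⟩⟩⟩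
  rintro ⟨i, ⟨hu, h⟩ | ⟨-, h⟩⟩ <;>
    have hij := eq_of_vtx_eq_vtx h (by rw [abs_lt]; omega)
  · rwa [Fin.ext (a := j) (b := i) (by omega)]
  · omega

theorem extSig_fin_add_iff (j : Fin m) : extSig u ((j : ℕ) + m) ↔ u j = 0 := by
  refine ⟨?_, fun hu => ⟨j, Or.inr ⟨hu, rfl⟩⟩⟩
  rintro ⟨i, ⟨-, h⟩ | ⟨hu, h⟩⟩ <;>
    have hij := eq_of_vtx_eq_vtx h (by rw [abs_lt]; omega)
  · omega
  · rwa [Fin.ext (a := j) (b := i) (by omega)]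

variable [NeZero m]

theorem Cplus_intCast_iff :
    Cplus m (c : ZMod (2 * m)) x y ↔
      (x = none ∧ y = vtx m c) ∨ (x = vtx m (c + m) ∧ y = none) ∨
      (∃ k : ℤ, 0 ≤ k ∧ k < m ∧ x = vtx m (c - k) ∧ y = vtx m (c + k + 1)) ∨
      ∃ k : ℤ, 0 < k ∧ k < m ∧ x = vtx m (c + k) ∧ y = vtx m (c - k) := by
  have hm := NeZero.pos m
  unfold Cplus vtx
  push_cast
  refine or_congr Iff.rfl (or_congr Iff.rfl (or_congr ⟨?_, ?_⟩ ⟨?_, ?_⟩))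
  · rintro ⟨k, hk, hx, hy⟩
    exact ⟨k, by omega, by omega, mod_cast hx, mod_cast hy⟩
  · rintro ⟨k, h0, hk, hx, hy⟩
    lift k to ℕ using h0
    exact ⟨k, by omega, mod_cast hx, mod_cast hy⟩
  · rintro ⟨k, h0, hk, hx, hy⟩
    exact ⟨k, by omega, by omega, mod_cast hx, mod_cast hy⟩
  · rintro ⟨k, h0, hk, hx, hy⟩
    lift k to ℕ using h0.le
    exact ⟨k, by omega, by omega, mod_cast hx, mod_cast hy⟩

theorem Cplus_swap_of_Cplus_add (h : Cplus m ((c + m : ℤ) : ZMod (2 * m)) x y) :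
    Cplus m (c : ZMod (2 * m)) y x := by
  rw [Cplus_intCast_iff] at h ⊢
  have hper {a b : ℤ} (h : b = a + 2 * m) : vtx m b = vtx m a := (vtx_eq_vtx_of_eq_add h).symm
  obtain ⟨rfl, rfl⟩ | ⟨rfl, rfl⟩ | ⟨k, h0, hk, rfl, rfl⟩ | ⟨k, h0, hk, rfl, rfl⟩ := h
  · exact Or.inr (Or.inl ⟨rfl, rfl⟩)
  · exact Or.inl ⟨rfl, hper (by ring)⟩
  · refine Or.inr (Or.inr (Or.inl ⟨m - 1 - k, by omega, by omega, hper (by ring), ?_⟩))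
    congr 1; ring
  · refine Or.inr (Or.inr (Or.inr ⟨m - k, by omega, by omega, ?_, hper (by ring)⟩))
    congr 1; ring

theorem Cplus_add_iff :
    Cplus m ((c + m : ℤ) : ZMod (2 * m)) x y ↔ Cplus m (c : ZMod (2 * m)) y x := by
  refine ⟨Cplus_swap_of_Cplus_add, fun h => Cplus_swap_of_Cplus_add ?_⟩
  have hcast : ((c + m + m : ℤ) : ZMod (2 * m)) = c :=
    (Option.some_inj.1 (vtx_eq_vtx_of_eq_add (b := c + m + m) (by ring))).symm
  rwa [hcast]

theorem warc_iff_exists_extSig :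
    warc m u x y ↔ ∃ c : ℤ, extSig u c ∧ Cplus m (c : ZMod (2 * m)) x y := by
  constructor
  · rintro ⟨j, ⟨hu, h⟩ | ⟨hu, h⟩⟩
    · exact ⟨(j : ℕ), ⟨j, Or.inl ⟨hu, rfl⟩⟩, mod_cast h⟩
    · exact ⟨(j : ℕ) + m, ⟨j, Or.inr ⟨hu, rfl⟩⟩, Cplus_add_iff.2 (mod_cast h)⟩
  · rintro ⟨c, ⟨j, ⟨hu, hc⟩ | ⟨hu, hc⟩⟩, h⟩ <;> rw [Option.some_inj.1 hc] at h
    · exact ⟨j, Or.inl ⟨hu, mod_cast h⟩⟩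
    · exact ⟨j, Or.inr ⟨hu, mod_cast Cplus_add_iff.1 h⟩⟩

theorem exists_fin_vtx_eq (c : ℤ) :
    ∃ j : Fin m, vtx m c = vtx m (j : ℕ) ∨ vtx m c = vtx m ((j : ℕ) + m) := by
  have hm := NeZero.pos m
  have h0 := Int.emod_nonneg c (b := m) (by omega)
  have h1 := Int.emod_lt_of_pos c (b := m) (by omega)
  have hc := Int.emod_add_mul_ediv c m
  lift c % m to ℕ using h0 with j
  refine ⟨⟨j, by omega⟩, ?_⟩
  obtain ⟨t, ht | ht⟩ := Int.even_or_odd' (c / m) <;> rw [ht] at hc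
  · exact Or.inl (vtx_eq_vtx_iff.2 ⟨-t, by linear_combination hc⟩)
  · exact Or.inr (vtx_eq_vtx_iff.2 ⟨-t, by linear_combination hc⟩)

theorem extSig_iff_not_of_eq_add (h : b = a + m) : extSig u b ↔ ¬ extSig u a := by
  have hval (w : ZMod 2) : w = 0 ↔ ¬ w = 1 := by revert w; decide
  subst h
  obtain ⟨j, hj | hj⟩ := exists_fin_vtx_eq (m := m) a
  · rw [extSig_congr hj, extSig_congr (vtx_add_eq_vtx_add hj m), extSig_fin_iff,
      extSig_fin_add_iff, hval]
  · rw [extSig_congr hj, extSig_fin_add_iff, hval, not_not, ← extSig_fin_iff]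
    exact extSig_congr ((vtx_add_eq_vtx_add hj m).trans (vtx_eq_vtx_of_eq_add (by ring)).symm)

theorem warc_none_vtx : warc m u none (vtx m c) ↔ extSig u c := by
  rw [warc_iff_exists_extSig]
  refine ⟨fun ⟨c', hc', h⟩ => ?_, fun hc => ⟨c, hc, Cplus_intCast_iff.2 (Or.inl ⟨rfl, rfl⟩)⟩⟩
  obtain ⟨-, h⟩ | ⟨h, -⟩ | ⟨k, -, -, h, -⟩ | ⟨k, -, -, h, -⟩ := Cplus_intCast_iff.1 h
  · exact (extSig_congr h).2 hc'
  all_goals exact absurd h.symm vtx_ne_none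

theorem warc_vtx_none : warc m u (vtx m c) none ↔ ¬ extSig u c := by
  rw [warc_iff_exists_extSig]
  constructor
  · rintro ⟨c', hc', h⟩
    obtain ⟨h, -⟩ | ⟨h, -⟩ | ⟨k, -, -, -, h⟩ | ⟨k, -, -, -, h⟩ := Cplus_intCast_iff.1 h
    · exact absurd h vtx_ne_none
    · rwa [extSig_congr h, extSig_iff_not_of_eq_add rfl, not_not]
    all_goals exact absurd h.symm vtx_ne_none
  · intro hc
    refine ⟨c - m, ?_, Cplus_intCast_iff.2 (Or.inr (Or.inl ⟨by rw [sub_add_cancel], rfl⟩))⟩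
    rwa [extSig_iff_not_of_eq_add (sub_add_cancel c m).symm, not_not] at hc

theorem warc_even_desc (h : a + b = 2 * c) (hba : b < a) (hab : a < b + 2 * m) :
    warc m u (vtx m a) (vtx m b) ↔ extSig u c := by
  obtain ⟨k, rfl⟩ : ∃ k, a = c + k := ⟨a - c, by ring⟩
  obtain rfl : b = c - k := by omega
  rw [warc_iff_exists_extSig]
  refine ⟨fun ⟨c', hc', h'⟩ => ?_, fun hc => ⟨c, hc, Cplus_intCast_iff.2
    (Or.inr (Or.inr (Or.inr ⟨k, by omega, by omega, rfl, rfl⟩)))⟩⟩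
  obtain ⟨h, -⟩ | ⟨-, h⟩ | ⟨k', -, -, hx, hy⟩ | ⟨k', h0, hk, hx, hy⟩ := Cplus_intCast_iff.1 h'
  · exact absurd h vtx_ne_none
  · exact absurd h vtx_ne_none
  · have := emod_two_eq_of_vtx_eq_vtx hx
    have := emod_two_eq_of_vtx_eq_vtx hy
    omega
  · obtain ⟨t, hxt, hyt⟩ := exists_eq_add_of_vtx_eq_vtx hx hy (by rw [abs_lt]; omega)
    exact (extSig_congr (vtx_eq_vtx_iff.2 ⟨t, by omega⟩)).2 hc'

theorem warc_odd_asc (h : a + b = 2 * c + 1) (hab : a < b) (hba : b < a + 2 * m) :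
    warc m u (vtx m a) (vtx m b) ↔ extSig u c := by
  obtain ⟨k, rfl⟩ : ∃ k, a = c - k := ⟨c - a, by ring⟩
  obtain rfl : b = c + k + 1 := by omega
  rw [warc_iff_exists_extSig]
  refine ⟨fun ⟨c', hc', h'⟩ => ?_, fun hc => ⟨c, hc, Cplus_intCast_iff.2
    (Or.inr (Or.inr (Or.inl ⟨k, by omega, by omega, rfl, rfl⟩)))⟩⟩
  obtain ⟨h, -⟩ | ⟨-, h⟩ | ⟨k', h0, hk, hx, hy⟩ | ⟨k', -, -, hx, hy⟩ := Cplus_intCast_iff.1 h'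
  · exact absurd h vtx_ne_none
  · exact absurd h vtx_ne_none
  · obtain ⟨t, hxt, hyt⟩ := exists_eq_add_of_vtx_eq_vtx hx hy (by rw [abs_lt]; omega)
    exact (extSig_congr (vtx_eq_vtx_iff.2 ⟨t, by omega⟩)).2 hc'
  · have := emod_two_eq_of_vtx_eq_vtx hx
    have := emod_two_eq_of_vtx_eq_vtx hy
    omega

theorem warc_even_asc (h : a + b = 2 * c) (hab : a < b) (hba : b < a + 2 * m) :
    warc m u (vtx m a) (vtx m b) ↔ ¬ extSig u c := by
  rw [vtx_eq_vtx_of_eq_add (a := a) rfl, ← extSig_iff_not_of_eq_add rfl]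
  exact warc_even_desc (by omega) hba (by omega)

theorem warc_odd_desc (h : a + b = 2 * c + 1) (hba : b < a) (hab : a < b + 2 * m) :
    warc m u (vtx m a) (vtx m b) ↔ ¬ extSig u c := by
  rw [vtx_eq_vtx_of_eq_add (a := b) rfl, ← extSig_iff_not_of_eq_add rfl]
  exact warc_odd_asc (by omega) hab (by omega)

end Arcs

section Regularity

variable {m : ℕ} {u : Fin m → ZMod 2} {c : ℤ} {x y z w : WVert m}

theorem IsUniqueApex.one_sub (h : IsUniqueApex (warc m u) x y z) :
    IsUniqueApex (warc m (1 - u)) y x z := by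
  rw [warc_one_sub]
  exact h.swap

variable [NeZero m]

theorem extSig_one_sub : extSig (1 - u) c ↔ ¬ extSig u c := by
  rw [← warc_none_vtx, warc_one_sub, ← warc_vtx_none, Function.swap]

theorem not_warc_self : ¬ warc m u x x := by
  rw [warc_iff_exists_extSig]
  rintro ⟨c, -, h⟩
  obtain ⟨rfl, h⟩ | ⟨rfl, h⟩ | ⟨k, -, -, rfl, h⟩ | ⟨k, h0, hk, rfl, h⟩ := Cplus_intCast_iff.1 h
  · exact vtx_ne_none h.symm
  · exact vtx_ne_none h
  · have := emod_two_eq_of_vtx_eq_vtx h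
    omega
  · have := eq_of_vtx_eq_vtx h (by rw [abs_lt]; omega)
    omega

theorem warc_swap_iff (hxy : x ≠ y) : warc m u y x ↔ ¬ warc m u x y := by
  rcases eq_or_ne x none with rfl | hx
  · obtain ⟨c, rfl⟩ := exists_eq_vtx_of_ne_none hxy.symm
    rw [warc_none_vtx, warc_vtx_none]
  · obtain ⟨a, rfl⟩ := exists_eq_vtx_of_ne_none hx
    obtain rfl | ⟨i, h0, hi, rfl | rfl⟩ := eq_none_or_exists_eq_vtx a y
    · rw [warc_none_vtx, warc_vtx_none, not_not]
    · have : i ≠ 0 := by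
        rintro rfl
        simp at hxy
      rw [warc_even_desc (c := a + i) (by ring) (by omega) (by omega),
        warc_even_asc (c := a + i) (by ring) (by omega) (by omega), not_not]
    · rw [warc_odd_desc (c := a + i) (by ring) (by omega) (by omega),
        warc_odd_asc (c := a + i) (by ring) (by omega) (by omega)]

instance : Std.Asymm (warc m u) where
  asymm _ _ hxy := (warc_swap_iff (fun h => not_warc_self (h ▸ hxy))).not_left.2 hxy

instance : Std.Trichotomous (warc m u) where
  trichotomous _ _ hxy hyx := by
    by_contra hne
    exact hyx ((warc_swap_iff hne).2 hxy)

theorem exists_injective_forall_warc (u : Fin m → ZMod 2) (x : WVert m) :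
    ∃ g : Fin m → WVert m, Function.Injective g ∧ ∀ i, warc m u x (g i) := by
  -- The vertices other than `x` fall into pairs, the neighbours of `x` along each of the `m`
  -- cycles, and each pair contains one out-neighbour of `x`.
  suffices ∃ pair : Fin m → Set (WVert m), Pairwise (Function.onFun Disjoint pair) ∧
      ∀ i, ∃ w ∈ pair i, warc m u x w by
    obtain ⟨pair, hdisj, hpair⟩ := this
    choose g hg hxg using hpair
    refine ⟨g, fun i j hij => ?_, hxg⟩
    by_contra hne
    exact Set.disjoint_left.1 (hdisj hne) (hg i) (hij ▸ hg j)
  rcases eq_or_ne x none with rfl | hx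
  · refine ⟨fun i => {vtx m (i : ℕ), vtx m ((i : ℕ) + m)}, fun i j hij => ?_, fun i => ?_⟩
    · rw [Function.onFun, Set.disjoint_left]
      rintro _ (rfl | rfl) (h | h) <;> have := eq_of_vtx_eq_vtx h (by rw [abs_lt]; omega) <;> omega
    · by_cases hi : extSig u (i : ℕ)
      · exact ⟨_, Or.inl rfl, warc_none_vtx.2 hi⟩
      · exact ⟨_, Or.inr rfl, warc_none_vtx.2 ((extSig_iff_not_of_eq_add rfl).2 hi)⟩
  · obtain ⟨a, rfl⟩ := exists_eq_vtx_of_ne_none hx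
    refine ⟨fun i => {w | w = vtx m (a + 2 * (i : ℕ) + 1) ∨ ((i : ℕ) = 0 ∧ w = none) ∨
      ((i : ℕ) ≠ 0 ∧ w = vtx m (a + 2 * (i : ℕ)))}, fun i j hij => ?_, fun i => ?_⟩
    · rw [Function.onFun, Set.disjoint_left]
      rintro _ (rfl | ⟨hi, rfl⟩ | ⟨hi, rfl⟩) (h | ⟨hj, h⟩ | ⟨hj, h⟩) <;>
        first
          | exact vtx_ne_none h
          | exact vtx_ne_none h.symm
          | omega
          | have := eq_of_vtx_eq_vtx h (by rw [abs_lt]; omega)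
            omega
    · by_cases hai : extSig u (a + (i : ℕ))
      · exact ⟨_, Or.inl rfl, (warc_odd_asc (by ring) (by omega) (by omega)).2 hai⟩
      by_cases hi : (i : ℕ) = 0
      · rw [hi, Nat.cast_zero, add_zero] at hai
        exact ⟨_, Or.inr (Or.inl ⟨hi, rfl⟩), warc_vtx_none.2 hai⟩
      · exact ⟨_, Or.inr (Or.inr ⟨hi, rfl⟩),
          (warc_even_asc (by ring) (by omega) (by omega)).2 hai⟩

theorem le_ncard_warc (u : Fin m → ZMod 2) (x : WVert m) : m ≤ {w | warc m u x w}.ncard := by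
  obtain ⟨g, hg, hxg⟩ := exists_injective_forall_warc u x
  calc m = (Set.range g).ncard := by rw [Set.ncard_range_of_injective hg, Nat.card_fin]
    _ ≤ _ := Set.ncard_le_ncard (Set.range_subset_iff.2 hxg)

theorem ncard_warc : {w | warc m u x w}.ncard = m := by
  refine (le_ncard_warc u x).antisymm' ?_
  have hin : m ≤ {w | warc m u w x}.ncard := by
    convert ← le_ncard_warc (1 - u) x using 4
    rw [warc_one_sub, Function.swap]
  have hdisj : Disjoint {w | warc m u x w} {w | warc m u w x} :=
    Set.disjoint_left.2 fun w hxw hwx => asymm_of (warc m u) hxw hwx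
  have hsub : {w | warc m u x w} ∪ {w | warc m u w x} ⊆ {x}ᶜ := by
    rintro w (hw | hw) rfl <;> exact not_warc_self hw
  have hle := Set.ncard_le_ncard hsub
  rw [Set.ncard_union_eq hdisj, Set.ncard_compl, Set.ncard_singleton, Nat.card_eq_fintype_card,
    Fintype.card_option, ZMod.card] at hle
  omega

theorem IsUniqueApex.not_warc_of_warc (h : IsUniqueApex (warc m u) x y z) (hxw : warc m u x w) :
    ¬ warc m u w y :=
  h.not_rel_of_rel (by rw [ncard_warc, ncard_warc]) hxw

end Regularity

section ArcsOffStar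

variable {m : ℕ} {u : Fin m → ZMod 2} {c k s : ℤ} {x y z : WVert m}

/-- The extended signature is `1` on the half-period `s, s + 1, …, s + m - 1`, hence `0` on the
other one. -/
def IsRun (u : Fin m → ZMod 2) (s : ℤ) : Prop :=
  ∀ i : ℤ, 0 ≤ i → i < m → extSig u (s + i)

/-- The possible arcs `(x, y)` away from `*` that have a unique apex `z ≠ *`. They occur for even
`m` only, at the two ends of a run of the extended signature; reversing all arcs swaps both ends. -/
def IsExceptional (u : Fin m → ZMod 2) (x y z : WVert m) : Prop :=
  Even m ∧ ∃ s, IsRun u s ∧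
    ((x = vtx m (s - 1) ∧ y = vtx m (s + m) ∧ z = vtx m s) ∨
      (x = vtx m s ∧ y = vtx m (s + m - 1) ∧ z = vtx m (s + m)))

variable [NeZero m]

theorem IsRun.not_extSig_sub (h : IsRun u s) (h0 : 0 < k) (hk : k ≤ m) : ¬ extSig u (s - k) := by
  rw [← extSig_iff_not_of_eq_add (b := s + (m - k)) (by ring)]
  exact h _ (by omega) (by omega)

theorem IsExceptional.of_one_sub (h : IsExceptional (1 - u) y x z) : IsExceptional u x y z := by
  obtain ⟨hm, s, hs, h⟩ := h
  refine ⟨hm, s + m, fun i h0 hi => ?_, ?_⟩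
  · rw [extSig_iff_not_of_eq_add (a := s + i) (by ring), ← extSig_one_sub]
    exact hs i h0 hi
  have hper {a b : ℤ} (h : b = a + 2 * m) : vtx m a = vtx m b := vtx_eq_vtx_of_eq_add h
  obtain ⟨rfl, rfl, rfl⟩ | ⟨rfl, rfl, rfl⟩ := h
  · exact Or.inr ⟨rfl, hper (by ring), hper (by ring)⟩
  · exact Or.inl ⟨rfl, hper (by ring), rfl⟩

theorem IsExceptional.left_unique {x' y' : WVert m} (h : IsExceptional u x y z)
    (h' : IsExceptional u x' y' z) : x = x' := by
  have hne {s t : ℤ} (hs : IsRun u s) (ht : IsRun u t) : vtx m s ≠ vtx m (t + m) := fun h => by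
    have hs0 := hs 0 le_rfl (by have := NeZero.pos m; omega)
    have ht0 := ht 0 le_rfl (by have := NeZero.pos m; omega)
    rw [add_zero] at hs0 ht0
    exact (extSig_iff_not_of_eq_add rfl).1 ((extSig_congr h).1 hs0) ht0
  obtain ⟨-, s, hs, ⟨rfl, -, rfl⟩ | ⟨rfl, -, rfl⟩⟩ := h <;>
    obtain ⟨-, t, ht, ⟨rfl, -, hz⟩ | ⟨rfl, -, hz⟩⟩ := h'
  · exact vtx_add_eq_vtx_add hz (-1)
  · exact absurd hz (hne hs ht)
  · exact absurd hz.symm (hne ht hs)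
  · simpa only [add_neg_cancel_right] using vtx_add_eq_vtx_add hz (-m)

theorem IsRun.isUniqueApex_none (hs : IsRun u s) (h0 : 0 < k) (hk : k < m) :
    IsUniqueApex (warc m u) (vtx m (s + k)) (vtx m (s - k)) none := by
  have hrel : warc m u (vtx m (s + k)) (vtx m (s - k)) := by
    rw [warc_even_desc (c := s + 0) (by ring) (by omega) (by omega)]
    exact hs 0 le_rfl (by omega)
  refine ⟨hrel, fun w => ⟨fun ⟨hyw, hwx⟩ => ?_, ?_⟩⟩
  · obtain rfl | ⟨i, hi0, him, rfl | rfl⟩ := eq_none_or_exists_eq_vtx (s - k) w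
    · rfl
    · exfalso
      obtain rfl | hi0 := hi0.eq_or_lt
      · exact not_warc_self (by simpa only [mul_zero, add_zero] using hyw)
      rw [warc_even_asc (c := s - k + i) (by ring) (by omega) (by omega)] at hyw
      rcases lt_trichotomy i k with hik | rfl | hik
      · rw [warc_even_asc (c := s + i) (by ring) (by omega) (by omega)] at hwx
        exact hwx (hs i (by omega) (by omega))
      · exact not_warc_self (by convert hwx using 2; ring)
      · exact hyw (by convert hs (i - k) (by omega) (by omega) using 1; ring)
    · exfalso
      rw [warc_odd_asc (c := s - k + i) (by ring) (by omega) (by omega)] at hyw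
      rcases lt_or_ge i k with hik | hik
      · exact hs.not_extSig_sub (k := k - i) (by omega) (by omega) (by convert hyw using 1; ring)
      · rw [warc_odd_desc (c := s + i) (by ring) (by omega) (by omega)] at hwx
        exact hwx (hs i (by omega) (by omega))
  · rintro rfl
    exact ⟨warc_vtx_none.2 (hs.not_extSig_sub h0 hk.le), warc_none_vtx.2 (hs k h0.le hk)⟩

namespace IsUniqueApex

theorem eq_none_of_even (h : IsUniqueApex (warc m u) (vtx m (c + k)) (vtx m (c - k)) z)
    (h0 : 0 < k) (hk : k < m) : z = none := by
  have hpk (p : ℤ) (hp0 : 0 < p) (hp : p < m - k) : extSig u (c + p) = extSig u (c + (p + k)) := by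
    refine propext ⟨fun hp' => ?_, fun hp' => ?_⟩ <;> by_contra hp''
    · refine h.not_warc_of_warc (w := vtx m (c + k + 2 * p))
        ((warc_even_asc (c := c + (p + k)) ?_ ?_ ?_).2 hp'')
        ((warc_even_desc (c := c + p) ?_ ?_ ?_).2 hp') <;> omega
    · refine h.not_warc_of_warc (w := vtx m (c + k + 2 * p + 1))
        ((warc_odd_asc (c := c + (p + k)) ?_ ?_ ?_).2 hp')
        ((warc_odd_desc (c := c + p) ?_ ?_ ?_).2 hp'') <;> omega
  have hpl (p : ℤ) (hp0 : 0 < p) (hp : p < k) :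
      extSig u (c + p) = extSig u (c + (p + (m - k))) := by
    rw [extSig_iff_not_of_eq_add (a := c - k + p) (b := c + (p + (m - k))) (by ring)]
    refine propext ⟨fun hp' hp'' => ?_, fun hp' => ?_⟩
    · refine h.not_warc_of_warc (w := vtx m (c - k + 2 * p))
        ((warc_even_desc (c := c + p) ?_ ?_ ?_).2 hp')
        ((warc_even_desc (c := c - k + p) ?_ ?_ ?_).2 hp'') <;> omega
    · by_contra hp''
      refine h.not_warc_of_warc (w := vtx m (c - k + 2 * p + 1))
        ((warc_odd_desc (c := c + p) ?_ ?_ ?_).2 hp'')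
        ((warc_odd_desc (c := c - k + p) ?_ ?_ ?_).2 hp') <;> omega
  have hkl : extSig u (c + k) = extSig u (c + (m - k)) :=
    eq_of_two_periods (fun p => extSig u (c + p)) h0 (by omega) hpk hpl
  rw [extSig_iff_not_of_eq_add (a := c - k) (b := c + (m - k)) (by ring)] at hkl
  have hx : extSig u (c + k) := by
    by_contra hx
    refine h.not_warc_of_warc (warc_vtx_none.2 hx) (warc_none_vtx.2 ?_)
    rwa [hkl, not_not] at hx
  exact (h.eq_apex (warc_vtx_none.2 (hkl ▸ hx)) (warc_none_vtx.2 hx)).symm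

theorem extSig_block_of_odd (h : IsUniqueApex (warc m u) (vtx m (c - k)) (vtx m (c + k + 1)) z)
    (hm : 3 ≤ m) (hk : k < m) (hmk : m ≤ 2 * k) :
    m = 2 * k ∧ (∀ p, 1 ≤ p → p ≤ k → extSig u (c + p)) ∧
      ∀ p, k + 1 ≤ p → p < m → ¬ extSig u (c + p) := by
  have hanti (p q : ℤ) (hpq : q = p + m) : extSig u (c + q) ↔ ¬ extSig u (c + p) :=
    extSig_iff_not_of_eq_add (by rw [hpq]; ring)
  have hork (p : ℤ) (h1 : 1 ≤ p) (hp : p ≤ m - 1 - k) :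
      extSig u (c + p) ∨ extSig u (c + (p + k)) := by
    by_contra! hp'
    refine h.not_warc_of_warc (w := vtx m (c + k + 2 * p))
      ((warc_even_asc (c := c + p) ?_ ?_ ?_).2 hp'.1)
      ((warc_odd_desc (c := c + (p + k)) ?_ ?_ ?_).2 hp'.2) <;> omega
  have horl (p : ℤ) (h1 : 1 ≤ p) (hp : p ≤ k) :
      extSig u (c + p) ∨ extSig u (c + (p + (m - 1 - k))) := by
    rw [hanti (p - 1 - k) (p + (m - 1 - k)) (by ring)]
    by_contra! hp'
    refine h.not_warc_of_warc (w := vtx m (c - k + 2 * p - 1))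
      ((warc_odd_asc (c := c + (p - 1 - k)) ?_ ?_ ?_).2 hp'.2)
      ((warc_even_asc (c := c + p) ?_ ?_ ?_).2 hp'.1) <;> omega
  have hand (p : ℤ) (h1 : 1 ≤ p) (hp : p < k) :
      ¬ (extSig u (c + p) ∧ extSig u (c + (p + (m - 1 - k) + 1))) := fun hp' => by
    rw [hanti (p - k) (p + (m - 1 - k) + 1) (by ring)] at hp'
    refine h.not_warc_of_warc (w := vtx m (c - k + 2 * p))
      ((warc_even_asc (c := c + (p - k)) ?_ ?_ ?_).2 hp'.2)
      ((warc_odd_asc (c := c + p) ?_ ?_ ?_).2 hp'.1) <;> omega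
  have hmid : ¬ (extSig u (c + (k + 1)) ∧ extSig u (c + (m - 1 - k + 1))) := fun ⟨hy, hx⟩ => by
    rw [hanti (-k) (m - 1 - k + 1) (by ring)] at hx
    exact h.not_warc_of_warc (warc_vtx_none.2 hx) (warc_none_vtx.2 (by rwa [add_assoc]))
  obtain ⟨hkl, hpos, hneg⟩ := block_of_or_of_not_and (f := fun p => extSig u (c + p))
    (by omega) (by omega) (by omega) hork horl hand hmid
  exact ⟨by omega, hpos, fun p hkp hp => hneg p hkp (by omega)⟩

theorem isExceptional_of_odd (h : IsUniqueApex (warc m u) (vtx m (c - k)) (vtx m (c + k + 1)) z)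
    (hm : 3 ≤ m) (hk : k < m) (hmk : m ≤ 2 * k) :
    IsExceptional u (vtx m (c - k)) (vtx m (c + k + 1)) z := by
  obtain ⟨hmk, hpos, hneg⟩ := h.extSig_block_of_odd hm hk hmk
  have hc : extSig u c := (warc_odd_asc (by ring) (by omega) (by omega)).1 h.rel
  have hrun : IsRun u (c - k + 1) := fun i h0 hi => by
    rcases lt_trichotomy i (k - 1) with hik | rfl | hik
    · have := hneg (i - k + 1 + m) (by omega) (by omega)
      rwa [extSig_iff_not_of_eq_add (a := c - k + 1 + i) (by ring), not_not] at this
    · convert hc using 1; ring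
    · convert hpos (i - k + 1) (by omega) (by omega) using 1; ring
  have hz : vtx m (c - k + 1) = z := by
    refine h.eq_apex ?_ ?_
    · exact (warc_even_desc (c := c + 1) (by ring) (by omega) (by omega)).2
        (hpos 1 le_rfl (by omega))
    · rw [warc_odd_desc (c := c - k) (by ring) (by omega) (by omega)]
      simpa only [add_sub_cancel_right] using hrun.not_extSig_sub one_pos (by omega)
  refine ⟨⟨k.toNat, by omega⟩, _, hrun, Or.inl ⟨?_, ?_, hz.symm⟩⟩ <;> congr 1 <;> omega

theorem eq_none_or_isExceptional_of_odd
    (h : IsUniqueApex (warc m u) (vtx m (c - k)) (vtx m (c + k + 1)) z) (hm : 3 ≤ m) (h0 : 0 ≤ k)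
    (hk : k < m) : z = none ∨ IsExceptional u (vtx m (c - k)) (vtx m (c + k + 1)) z := by
  rcases lt_trichotomy (m : ℤ) (2 * k + 1) with hmk | hmk | hmk
  · exact Or.inr (h.isExceptional_of_odd hm hk (by omega))
  · have hanti : extSig u (c + k + 1) ↔ ¬ extSig u (c - k) :=
      extSig_iff_not_of_eq_add (by rw [hmk]; ring)
    have hy : ¬ extSig u (c + k + 1) := fun hy =>
      h.not_warc_of_warc (warc_vtx_none.2 (hanti.1 hy)) (warc_none_vtx.2 hy)
    have hx := not_not.1 (mt hanti.2 hy)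
    exact Or.inl (h.eq_apex (warc_vtx_none.2 hy) (warc_none_vtx.2 hx)).symm
  -- Reversing all arcs turns the parameters `(c, k)` of the arc into `(c + m, m - 1 - k)`.
  · have hy : c + k + 1 = c + m - (m - 1 - k) := by ring
    have hx : vtx m (c - k) = vtx m (c + m + (m - 1 - k) + 1) := vtx_eq_vtx_of_eq_add (by ring)
    rw [hx, hy] at h ⊢
    exact Or.inr (h.one_sub.isExceptional_of_odd hm (by omega) (by omega)).of_one_sub

theorem eq_none_or_isExceptional (h : IsUniqueApex (warc m u) x y z) (hm : 3 ≤ m) (hx : x ≠ none)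
    (hy : y ≠ none) : z = none ∨ IsExceptional u x y z := by
  obtain ⟨b, rfl⟩ := exists_eq_vtx_of_ne_none hy
  obtain rfl | ⟨i, h0, hi, rfl | rfl⟩ := eq_none_or_exists_eq_vtx b x
  · exact absurd rfl hx
  · obtain rfl | h0 := h0.eq_or_lt
    · exact absurd (by simpa using h.rel) not_warc_self
    · refine Or.inl (eq_none_of_even (u := u) (c := b + i) ?_ h0 hi)
      convert h using 2 <;> ring
  · have hx' : b + 2 * i + 1 = b + i + m - (m - 1 - i) := by ring
    have hy' : vtx m b = vtx m (b + i + m + (m - 1 - i) + 1) := vtx_eq_vtx_of_eq_add (by ring)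
    rw [hx', hy'] at h ⊢
    exact h.eq_none_or_isExceptional_of_odd hm (by omega) (by omega)

end IsUniqueApex

end ArcsOffStar

section ArcsAtStar

variable {m : ℕ} [NeZero m] {u : Fin m → ZMod 2} {c : ℤ} {x y z p q w z₁ z₂ : WVert m}

namespace IsUniqueApex

theorem extSig_of_none_left (h : IsUniqueApex (warc m u) none (vtx m c) z) (hm : 3 ≤ m) :
    m = 5 ∧ extSig u c ∧ extSig u (c + 1) ∧ ¬ extSig u (c + 2) ∧ extSig u (c + 3) ∧
      extSig u (c + 4) := by
  have heven (i : ℤ) (h1 : 1 ≤ i) (hi : i < m) (hci : extSig u (c + i)) :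
      ¬ extSig u (c + 2 * i) := fun h2 => by
    refine h.not_warc_of_warc (warc_none_vtx.2 h2)
      ((warc_even_desc (c := c + i) ?_ ?_ ?_).2 hci) <;> omega
  have hodd (i : ℤ) (h0 : 0 ≤ i) (hi : i < m) (h2 : extSig u (c + (2 * i + 1))) :
      extSig u (c + i) := by
    by_contra hci
    refine h.not_warc_of_warc (warc_none_vtx.2 h2)
      ((warc_odd_desc (c := c + i) ?_ ?_ ?_).2 hci) <;> omega
  obtain ⟨hm5, hpat⟩ := eq_five_of_antiperiodic_of_doubling (f := fun p => extSig u (c + p))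
    (mod_cast hm) (fun p => extSig_iff_not_of_eq_add (by ring)) heven hodd
  exact ⟨mod_cast hm5, warc_none_vtx.1 h.rel, hpat⟩

theorem eq_vtx_sub_one_of_none_left (h : IsUniqueApex (warc m u) none (vtx m c) z) (hm : 3 ≤ m) :
    z = vtx m (c - 1) := by
  have hc : ¬ extSig u (c - 1) := fun hc =>
    h.not_warc_of_warc (warc_none_vtx.2 hc)
      ((warc_odd_asc (by ring) (by omega) (by omega)).2 hc)
  exact (h.eq_apex ((warc_odd_desc (c := c - 1) (by ring) (by omega) (by omega)).2 hc)
    (warc_vtx_none.2 hc)).symm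

theorem isUniqueApex_add_five_none (h : IsUniqueApex (warc m u) none (vtx m c) z) (hm : 3 ≤ m) :
    IsUniqueApex (warc m u) (vtx m (c + 5)) none (vtx m (c + 4)) := by
  obtain ⟨rfl, h0, h1, h2, h3, h4⟩ := h.extSig_of_none_left hm
  have hanti {i j : ℤ} (hij : i = c + j + 5) : extSig u i ↔ ¬ extSig u (c + j) :=
    extSig_iff_not_of_eq_add hij
  have hx : ¬ extSig u (c + 5) := (hanti (j := 0) (by ring)).not_left.2 (by rwa [add_zero])
  refine ⟨warc_vtx_none.2 hx, fun w => ⟨fun ⟨hyw, hwx⟩ => ?_, ?_⟩⟩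
  · obtain rfl | ⟨i, hi0, hi5, rfl | rfl⟩ := eq_none_or_exists_eq_vtx (c + 5) w
    · exact absurd hyw not_warc_self
    · exfalso
      obtain rfl | hi0 := hi0.eq_or_lt
      · exact not_warc_self (by simpa only [mul_zero, add_zero] using hwx)
      rw [warc_none_vtx, hanti (j := 2 * i) (by ring)] at hyw
      rw [warc_even_desc (c := c + 5 + i) (by ring) (by omega) (by omega),
        hanti (j := i) (by ring)] at hwx
      obtain rfl | rfl | rfl | rfl : i = 1 ∨ i = 2 ∨ i = 3 ∨ i = 4 := by omega
      exacts [hwx h1, hyw h4, hwx h3, hwx h4]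
    · rw [warc_none_vtx, hanti (j := 2 * i + 1) (by ring)] at hyw
      rw [warc_odd_desc (c := c + 5 + i) (by ring) (by omega) (by omega),
        hanti (j := i) (by ring), not_not] at hwx
      obtain rfl | rfl | rfl | rfl | rfl : i = 0 ∨ i = 1 ∨ i = 2 ∨ i = 3 ∨ i = 4 := by omega
      · exact absurd h1 hyw
      · exact absurd h3 hyw
      · exact absurd hwx h2
      · exact absurd ((hanti (j := 2) (by ring)).2 h2) hyw
      · exact (vtx_eq_vtx_of_eq_add (by push_cast; ring)).symm
  · rintro rfl
    exact ⟨warc_none_vtx.2 h4, (warc_odd_asc (c := c + 4) (by ring) (by omega) (by omega)).2 h4⟩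

theorem exists_path_of_none_left (h : IsUniqueApex (warc m u) none y z) (hm : 3 ≤ m) :
    m = 5 ∧ ∃ p q z₁ z₂, IsUniqueApex (warc m u) p none z₁ ∧ IsUniqueApex (warc m u) none q z₂ := by
  have hy : y ≠ none := by
    rintro rfl
    exact not_warc_self h.rel
  obtain ⟨c, rfl⟩ := exists_eq_vtx_of_ne_none hy
  exact ⟨(h.extSig_of_none_left hm).1, _, _, _, _, h.isUniqueApex_add_five_none hm, h⟩

theorem exists_path_of_none (h : IsUniqueApex (warc m u) x y z) (hm : 3 ≤ m)
    (hxy : x = none ∨ y = none) :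
    m = 5 ∧ ∃ p q z₁ z₂, IsUniqueApex (warc m u) p none z₁ ∧ IsUniqueApex (warc m u) none q z₂ := by
  obtain rfl | rfl := hxy
  · exact h.exists_path_of_none_left hm
  · obtain ⟨hm5, p, q, z₁, z₂, hp, hq⟩ := h.one_sub.exists_path_of_none_left hm
    rw [← sub_sub_cancel 1 u]
    exact ⟨hm5, q, p, z₂, z₁, hq.one_sub, hp.one_sub⟩

theorem eq_none_of_odd_card (h : IsUniqueApex (warc m u) x y z) (hm : 3 ≤ m) (hodd : Odd m)
    (hx : x ≠ none) (hy : y ≠ none) : z = none :=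
  (h.eq_none_or_isExceptional hm hx hy).resolve_right fun he =>
    Nat.not_even_iff_odd.2 hodd he.1

theorem eq_none_of_none_left (h : IsUniqueApex (warc m u) none w z₁)
    (h' : IsUniqueApex (warc m u) w q z₂) (hm : 3 ≤ m) (hodd : Odd m) : w = none := by
  by_contra hw
  obtain ⟨c, rfl⟩ := exists_eq_vtx_of_ne_none hw
  have hc := warc_none_vtx.1 h.rel
  have hq : q ≠ none := by
    rintro rfl
    exact asymm_of (warc m u) h.rel h'.rel
  obtain rfl := h'.eq_none_of_odd_card hm hodd hw hq
  obtain rfl : q = vtx m (c - 1) :=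
    (h.eq_apex h'.rel h'.rel_right).trans (h.eq_vtx_sub_one_of_none_left hm)
  exact h'.not_warc_of_warc (w := vtx m (c + 1))
    ((warc_odd_asc (by ring) (by omega) (by omega)).2 hc)
    ((warc_even_desc (c := c) (by ring) (by omega) (by omega)).2 hc)

theorem eq_none_of_path (h : IsUniqueApex (warc m u) p w z₁)
    (h' : IsUniqueApex (warc m u) w q z₂) (hm : 3 ≤ m) (hodd : Odd m) : w = none := by
  rcases eq_or_ne p none with rfl | hp
  · exact h.eq_none_of_none_left h' hm hodd
  rcases eq_or_ne q none with rfl | hq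
  · exact h'.one_sub.eq_none_of_none_left h.one_sub hm hodd
  by_contra hw
  obtain rfl := h.eq_none_of_odd_card hm hodd hp hw
  obtain rfl := h'.eq_none_of_odd_card hm hodd hw hq
  exact asymm_of (warc m u) h.rel_right h'.rel_left

end IsUniqueApex

end ArcsAtStar

section Isomorphisms

variable {m : ℕ} [NeZero m] {u v : Fin m → ZMod 2} {x y z : WVert m}

theorem map_none_of_isUniqueApex_of_eq_none (φ : warc m u ≃r warc m v) (hm : 3 ≤ m)
    (h : IsUniqueApex (warc m u) x y z) (hxy : x = none ∨ y = none) : φ none = none := by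
  obtain ⟨rfl, p, q, z₁, z₂, hp, hq⟩ := h.exists_path_of_none hm hxy
  exact (hp.map φ).eq_none_of_path (hq.map φ) hm (by decide)

theorem isExceptional_map (φ : warc m u ≃r warc m v) (hm : 3 ≤ m) (hφ : φ none ≠ none)
    (h : IsUniqueApex (warc m u) x y none) : IsExceptional v (φ x) (φ y) (φ none) := by
  have hxy : ¬ (φ x = none ∨ φ y = none) := fun hxy => hφ <| by
    conv_lhs => rw [← map_none_of_isUniqueApex_of_eq_none φ.symm hm (h.map φ) hxy]
    exact φ.apply_symm_apply none
  rw [not_or] at hxy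
  exact ((h.map φ).eq_none_or_isExceptional hm hxy.1 hxy.2).resolve_left hφ

-- A run yields two arcs with apex `*`, but a vertex is the apex of at most one exceptional arc.
theorem map_none_of_isRun (φ : warc m u ≃r warc m v) (hm : 3 ≤ m) {s : ℤ} (hs : IsRun u s) :
    φ none = none := by
  by_contra hφ
  have h₁ := isExceptional_map φ hm hφ (hs.isUniqueApex_none one_pos (by omega))
  have h₂ := isExceptional_map φ hm hφ (hs.isUniqueApex_none two_pos (by omega))
  have := eq_of_vtx_eq_vtx (φ.injective (h₁.left_unique h₂)) (by rw [abs_lt]; omega)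
  omega

theorem map_none_of_isUniqueApex_none (φ : warc m u ≃r warc m v) (hm : 3 ≤ m)
    (h : IsUniqueApex (warc m u) x y none) : φ none = none := by
  by_contra hφ
  obtain ⟨-, s, hs, -⟩ := isExceptional_map φ hm hφ h
  exact hφ (φ.symm_apply_eq.1 (map_none_of_isRun φ.symm hm hs)).symm

theorem map_none_of_isUniqueApex (φ : warc m u ≃r warc m v) (hm : 3 ≤ m)
    (h : IsUniqueApex (warc m u) x y z) : φ none = none := by
  by_cases hxy : x = none ∨ y = none
  · exact map_none_of_isUniqueApex_of_eq_none φ hm h hxy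
  rw [not_or] at hxy
  obtain rfl | ⟨-, s, hs, -⟩ := h.eq_none_or_isExceptional hm hxy.1 hxy.2
  · exact map_none_of_isUniqueApex_none φ hm h
  · exact map_none_of_isRun φ hm hs

end Isomorphisms

end Walecki

/-- Let `m ≥ 3` and suppose `W_u` contains an arc `a` with `d(a) = 1`.
Then every isomorphism from `W_u` to `W_v` maps the vertex `*` of `W_u` to the
vertex `*` of `W_v`; in particular (taking `v = u`), every automorphism of `W_u`
fixes `*`. -/
theorem walecki_stmt17 (m : ℕ) (hm : 3 ≤ m) (u v : Fin m → ZMod 2)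
    (hex : ∃ x y : WVert m, warc m u x y ∧ dcount (warc m u) x y = 1)
    (φ : WVert m → WVert m)
    (hbij : Function.Bijective φ)
    (hiso : ∀ x y : WVert m, warc m u x y ↔ warc m v (φ x) (φ y)) :
    φ none = none := by
  have : NeZero m := ⟨by omega⟩
  obtain ⟨x, y, hxy, hd⟩ := hex
  obtain ⟨z, hz⟩ := Walecki.exists_isUniqueApex_of_dcount_eq_one hxy hd
  exact Walecki.map_none_of_isUniqueApex ⟨Equiv.ofBijective φ hbij, (hiso _ _).symm⟩ hm hz
end
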